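/- arXiv:2605.22173 — 6 statements merged into one kernel-verified Lean document; each statement's English description precedes it below -/
import Mathlib

section
/- Let q be a prime power, F a finite field with q elements, d ≥ 3 an integer, S ⊆ {1,…,d−1} with |S| ≥ 2, and let s be a face of the projected flags complex B(d,S,q) with |S| − |s| ≥ 2 (s possibly empty). The vertices of the link of s are the subspaces W with dim(W) ∈ S, W ∉ s and s ∪ {W} a chain. Let π₀ be the distribution obtained by sampling a uniformly random maximal face T of B(d,S,q) with s ⊆ T and then a uniformly random element of T∖s, and let (U,V) be obtained by sampling such a T and then a uniformly random ordered pair of distinct elements of T∖s. Then every f from the vertices of the link of s to ℝ with E_{U∼π₀}[f(U)] = 0 satisfies E[f(U)·f(V)] ≤ (2/((|S|−|s|−1)·(√q−1)))·E_{U∼π₀}[f(U)²]. In particular (taking s = ∅), the underlying weighted graph of B(d,S,q) has normalized second eigenvalue at most 2/((|S|−1)·(√q−1)). -/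
open Finset
open scoped Classical

noncomputable instance (F : Type) [Field F] [Fintype F] (n : ℕ) :
    Fintype (Submodule F (Fin n → F)) :=
  Fintype.ofInjective (fun W => (W : Set (Fin n → F)))
    fun _ _ h => SetLike.coe_injective h

/-- A face of the projected flags complex `B(n,S,q)`: a finite chain of subspaces of `F^n`
whose dimensions all lie in `S`. -/
def IsFlagFace (F : Type) [Field F] [Fintype F] (n : ℕ) (S : Finset ℕ)
    (s : Finset (Submodule F (Fin n → F))) : Prop :=
  IsChain (· ≤ ·) (s : Set (Submodule F (Fin n → F))) ∧
    ∀ W ∈ s, Module.finrank F W ∈ S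

/-- A maximal face of `B(n,S,q)`: a chain containing one subspace of each dimension in `S`. -/
def IsMaxFlagFace (F : Type) [Field F] [Fintype F] (n : ℕ) (S : Finset ℕ)
    (T : Finset (Submodule F (Fin n → F))) : Prop :=
  IsFlagFace F n S T ∧ ∀ i ∈ S, ∃ W ∈ T, Module.finrank F W = i

/-- The maximal faces of `B(n,S,q)` containing a given face `s`. -/
noncomputable def maxFacesAbove (F : Type) [Field F] [Fintype F] (n : ℕ) (S : Finset ℕ)
    (s : Finset (Submodule F (Fin n → F))) : Finset (Finset (Submodule F (Fin n → F))) :=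
  Finset.univ.filter fun T => IsMaxFlagFace F n S T ∧ s ⊆ T

/-- `E_{U ∼ π₀}[f(U)]` where `π₀` samples a uniform maximal face `T ⊇ s` and then a uniform
element of `T \ s`. -/
noncomputable def linkVertExp (F : Type) [Field F] [Fintype F] (n : ℕ) (S : Finset ℕ)
    (s : Finset (Submodule F (Fin n → F))) (f : Submodule F (Fin n → F) → ℝ) : ℝ :=
  (∑ T ∈ maxFacesAbove F n S s, (∑ U ∈ T \ s, f U) / ((T \ s).card : ℝ)) /
    ((maxFacesAbove F n S s).card : ℝ)

/-- `E[f(U)·g(V)]` where one samples a uniform maximal face `T ⊇ s` and then a uniformly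
random ordered pair of distinct elements `(U,V)` of `T \ s`. -/
noncomputable def linkPairExp (F : Type) [Field F] [Fintype F] (n : ℕ) (S : Finset ℕ)
    (s : Finset (Submodule F (Fin n → F))) (f g : Submodule F (Fin n → F) → ℝ) : ℝ :=
  (∑ T ∈ maxFacesAbove F n S s,
      (∑ U ∈ T \ s, ∑ V ∈ (T \ s).erase U, f U * g V) /
        (((T \ s).card : ℝ) * (((T \ s).card : ℝ) - 1))) /
    ((maxFacesAbove F n S s).card : ℝ)

/-!
Fix the dimensions of a flag and let `level s i` be the set of `i`-dimensional subspaces compatible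
with the flag `s`. In a lattice of subspaces the down-up and up-down walks on one level differ by a
scalar, since two distinct subspaces of equal dimension have a common cover exactly when they cover
a common subspace. By induction on the level, the averaging operator from level `i` to level `i + 1`
contracts functions of mean zero by `1 / √q`; these operators compose, so the one from level `i` to
level `j` contracts by `√q ^ (-|i - j|)`.

Counting extensions of flags shows that the member of dimension `i` of a random maximal flag above
`s` is uniform on `level s i`. After subtracting from `f` its mean on each level, the contraction
bounds all mixed moments, and the geometric series `∑ⱼ √q ^ (-|i - j|) ≤ (√q + 1) / (√q - 1)` bounds
the second moment of the sum of `f` over a random flag. Removing the diagonal turns this constant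
into `(√q + 1) / (√q - 1) - 1 = 2 / (√q - 1)`.
-/

namespace ProjectedFlags

open Module
open scoped BigOperators

section Averages

variable {α β : Type*}

lemma exists_forall_mem_eq {Z : Finset α} {g : α → ℕ} (hg : ∀ z ∈ Z, ∀ z' ∈ Z, g z = g z') :
    ∃ a, ∀ z ∈ Z, g z = a :=
  Z.eq_empty_or_nonempty.elim (fun hZ => ⟨0, by simp [hZ]⟩)
    fun ⟨z, hz⟩ => ⟨g z, fun z' hz' => hg z' hz' z hz⟩

lemma card_mul_eq_of_mem_iff {X : Finset α} {Y : Finset β} {N : α → Finset β}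
    {N' : β → Finset α} {a b : ℕ} (h : ∀ x y, x ∈ X ∧ y ∈ N x ↔ x ∈ N' y ∧ y ∈ Y)
    (ha : ∀ x ∈ X, #(N x) = a) (hb : ∀ y ∈ Y, #(N' y) = b) : #X * a = #Y * b := by
  calc #X * a = ∑ x ∈ X, ∑ _y ∈ N x, 1 := by simp [sum_congr rfl ha]
    _ = ∑ y ∈ Y, ∑ _x ∈ N' y, 1 := sum_comm' h
    _ = #Y * b := by simp [sum_congr rfl hb]

lemma expect_expect_comm_of_card_eq {K : Type*} [Semifield K] [CharZero K]
    {X : Finset α} {Y : Finset β} {N : α → Finset β} {N' : β → Finset α}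
    (h : ∀ x y, x ∈ X ∧ y ∈ N x ↔ x ∈ N' y ∧ y ∈ Y)
    (hN : ∀ x ∈ X, ∀ x' ∈ X, #(N x) = #(N x')) (hN' : ∀ y ∈ Y, ∀ y' ∈ Y, #(N' y) = #(N' y'))
    (φ : α → β → K) :
    𝔼 x ∈ X, 𝔼 y ∈ N x, φ x y = 𝔼 y ∈ Y, 𝔼 x ∈ N' y, φ x y := by
  obtain ⟨a, ha⟩ := exists_forall_mem_eq hN
  obtain ⟨b, hb⟩ := exists_forall_mem_eq hN'
  have hX : 𝔼 x ∈ X, 𝔼 y ∈ N x, φ x y = (∑ x ∈ X, ∑ y ∈ N x, φ x y) / (#X * a : ℕ) := by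
    simp only [expect_eq_sum_div_card]
    rw [sum_congr rfl fun x hx => by rw [ha x hx], ← sum_div, div_div, Nat.cast_mul, mul_comm]
  have hY : 𝔼 y ∈ Y, 𝔼 x ∈ N' y, φ x y = (∑ y ∈ Y, ∑ x ∈ N' y, φ x y) / (#Y * b : ℕ) := by
    simp only [expect_eq_sum_div_card]
    rw [sum_congr rfl fun y hy => by rw [hb y hy], ← sum_div, div_div, Nat.cast_mul, mul_comm]
  rw [hX, hY, card_mul_eq_of_mem_iff h ha hb, sum_comm' h]

lemma expect_sq_expect_eq_of_card_eq {K : Type*} [Semifield K] [CharZero K]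
    {X : Finset α} {Y : Finset β} {N : α → Finset β} {N' : β → Finset α} {a b : ℕ}
    (h : ∀ x y, x ∈ X ∧ y ∈ N x ↔ x ∈ N' y ∧ y ∈ Y)
    (ha : ∀ x ∈ X, #(N x) = a) (hb : ∀ y ∈ Y, #(N' y) = b) (f : α → K) :
    𝔼 y ∈ Y, (𝔼 x ∈ N' y, f x) ^ 2 = (∑ y ∈ Y, (∑ x ∈ N' y, f x) ^ 2) / (#X * (b * a)) := by
  have card_mul : (#X * a : K) = #Y * b := mod_cast card_mul_eq_of_mem_iff h ha hb
  simp only [expect_eq_sum_div_card, div_pow]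
  rw [sum_congr rfl fun y hy => by rw [hb y hy], ← sum_div, div_div, mul_left_comm, card_mul,
    sq, mul_right_comm, mul_comm (b * #Y : K), mul_comm (b : K) #Y]

lemma expect_sub_expect_sq_le (X : Finset α) (f : α → ℝ) :
    𝔼 x ∈ X, (f x - 𝔼 y ∈ X, f y) ^ 2 ≤ 𝔼 x ∈ X, f x ^ 2 := by
  obtain rfl | hX := X.eq_empty_or_nonempty
  · simp
  set μ := 𝔼 y ∈ X, f y with hμ
  have variance : 𝔼 x ∈ X, (f x - μ) ^ 2 = 𝔼 x ∈ X, f x ^ 2 - μ ^ 2 := by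
    simp only [sub_sq, expect_add_distrib, expect_sub_distrib, expect_const hX, mul_assoc,
      ← mul_expect, ← expect_mul, ← hμ]
    ring
  linarith [sq_nonneg μ]

lemma sum_sq_sum_eq {R : Type*} [CommSemiring R] {X : Finset α} {Y : Finset β}
    {N : β → Finset α} {C : α → α → Finset β}
    (h : ∀ y x₁ x₂, y ∈ Y ∧ x₁ ∈ N y ∧ x₂ ∈ N y ↔ y ∈ C x₁ x₂ ∧ x₁ ∈ X ∧ x₂ ∈ X) (f : α → R) :
    ∑ y ∈ Y, (∑ x ∈ N y, f x) ^ 2 = ∑ x₁ ∈ X, ∑ x₂ ∈ X, #(C x₁ x₂) * (f x₁ * f x₂) := by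
  calc ∑ y ∈ Y, (∑ x ∈ N y, f x) ^ 2
      = ∑ y ∈ Y, ∑ p ∈ N y ×ˢ N y, f p.1 * f p.2 := by
        simp only [sq, sum_mul_sum, sum_product]
    _ = ∑ p ∈ X ×ˢ X, ∑ _y ∈ C p.1 p.2, f p.1 * f p.2 :=
        sum_comm' fun _ p => by simpa only [mem_product] using h _ p.1 p.2
    _ = ∑ x₁ ∈ X, ∑ x₂ ∈ X, #(C x₁ x₂) * (f x₁ * f x₂) := by
        simp only [sum_const, nsmul_eq_mul, sum_product]

lemma sum_sum_erase_mul_eq {R : Type*} [DecidableEq α] [CommRing R] (A : Finset α) (f : α → R) :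
    ∑ x ∈ A, ∑ y ∈ A.erase x, f x * f y = (∑ x ∈ A, f x) ^ 2 - ∑ x ∈ A, f x ^ 2 := by
  rw [sq, sum_mul_sum, ← sum_sub_distrib]
  exact sum_congr rfl fun x hx => by rw [sum_erase_eq_sub hx, sq]

/-- An operator and its adjoint have the same norm, here on the subspace reached from `f`:
`‖A f‖⁴ = ⟪f, Aᵀ A f⟫² ≤ ‖f‖² * ‖Aᵀ A f‖²`. -/
lemma sum_sq_sum_le_of_adjoint {X : Finset α} {Y : Finset β} {N : α → Finset β}
    {N' : β → Finset α} (h : ∀ x y, x ∈ X ∧ y ∈ N x ↔ x ∈ N' y ∧ y ∈ Y) {f : β → ℝ} {c : ℝ}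
    (hc : 0 ≤ c)
    (hN' : ∑ y ∈ Y, (∑ x ∈ N' y, ∑ z ∈ N x, f z) ^ 2 ≤ c * ∑ x ∈ X, (∑ y ∈ N x, f y) ^ 2) :
    ∑ x ∈ X, (∑ y ∈ N x, f y) ^ 2 ≤ c * ∑ y ∈ Y, f y ^ 2 := by
  set n := ∑ x ∈ X, (∑ y ∈ N x, f y) ^ 2
  have adjoint : n = ∑ y ∈ Y, f y * ∑ x ∈ N' y, ∑ z ∈ N x, f z := by
    calc n = ∑ x ∈ X, ∑ y ∈ N x, f y * ∑ z ∈ N x, f z := by simp only [n, sq, sum_mul]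
      _ = _ := by rw [sum_comm' h]; simp only [mul_sum]
  have cauchy_schwarz : n ^ 2 ≤ (∑ y ∈ Y, f y ^ 2) * (c * n) := by
    calc n ^ 2 ≤ (∑ y ∈ Y, f y ^ 2) * ∑ y ∈ Y, (∑ x ∈ N' y, ∑ z ∈ N x, f z) ^ 2 :=
          adjoint ▸ sum_mul_sq_le_sq_mul_sq Y _ _
      _ ≤ _ := by gcongr
  have hn : 0 ≤ n := sum_nonneg fun _ _ => sq_nonneg _
  obtain hn | hn := hn.eq_or_lt
  · rw [← hn]; positivity
  · nlinarith

lemma sum_pow_le_of_injOn {ρ : ℝ} (h0 : 0 ≤ ρ) (h1 : ρ < 1) {J : Finset α}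
    {e : α → ℕ} (he : Set.InjOn e J) : ∑ j ∈ J, ρ ^ e j ≤ (1 - ρ)⁻¹ := by
  rw [← sum_image (f := fun n => ρ ^ n) he]
  exact sum_le_hasSum _ (fun n _ => by positivity) (hasSum_geometric_of_lt_one h0 h1)

lemma sum_pow_dist_le {ρ : ℝ} (h0 : 0 ≤ ρ) (h1 : ρ < 1) (I : Finset ℕ) (i : ℕ) :
    ∑ j ∈ I, ρ ^ Nat.dist i j ≤ (1 + ρ) / (1 - ρ) := by
  have above : ∑ j ∈ I with i ≤ j, ρ ^ Nat.dist i j ≤ (1 - ρ)⁻¹ := by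
    refine sum_pow_le_of_injOn h0 h1 fun j hj k hk h => ?_
    simp only [coe_filter, Set.mem_ofPred_eq] at hj hk
    simp only [Nat.dist_eq_sub_of_le hj.2, Nat.dist_eq_sub_of_le hk.2] at h
    omega
  have below : ∑ j ∈ I with ¬ i ≤ j, ρ ^ Nat.dist i j ≤ ρ * (1 - ρ)⁻¹ := by
    calc ∑ j ∈ I with ¬ i ≤ j, ρ ^ Nat.dist i j
        = ρ * ∑ j ∈ I with ¬ i ≤ j, ρ ^ (i - 1 - j) := by
          rw [mul_sum]
          refine sum_congr rfl fun j hj => ?_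
          have hji : j < i := not_le.1 (mem_filter.1 hj).2
          rw [Nat.dist_eq_sub_of_le_right hji.le, ← pow_succ']
          congr 1
          omega
      _ ≤ ρ * (1 - ρ)⁻¹ := by
          refine mul_le_mul_of_nonneg_left (sum_pow_le_of_injOn h0 h1 fun j hj k hk h => ?_) h0
          simp only [coe_filter, Set.mem_ofPred_eq] at hj hk
          omega
  calc ∑ j ∈ I, ρ ^ Nat.dist i j ≤ (1 - ρ)⁻¹ + ρ * (1 - ρ)⁻¹ := by
        rw [← sum_filter_add_sum_filter_not I (i ≤ ·)]
        exact add_le_add above below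
    _ = (1 + ρ) / (1 - ρ) := by ring

lemma sum_sum_le_of_le_pow_dist {ρ : ℝ} (h0 : 0 ≤ ρ) (h1 : ρ < 1) {I : Finset ℕ} {a : ℕ → ℝ}
    (ha : ∀ i ∈ I, 0 ≤ a i) {G : ℕ → ℕ → ℝ}
    (hG : ∀ i ∈ I, ∀ j ∈ I, G i j ≤ ρ ^ Nat.dist i j * ((a i + a j) / 2)) :
    ∑ i ∈ I, ∑ j ∈ I, G i j ≤ (1 + ρ) / (1 - ρ) * ∑ i ∈ I, a i := by
  have symmetrize : ∑ i ∈ I, ∑ j ∈ I, ρ ^ Nat.dist i j * a j =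
      ∑ i ∈ I, ∑ j ∈ I, ρ ^ Nat.dist i j * a i := by
    rw [sum_comm]
    simp only [Nat.dist_comm]
  calc ∑ i ∈ I, ∑ j ∈ I, G i j
      ≤ ∑ i ∈ I, ∑ j ∈ I, ρ ^ Nat.dist i j * ((a i + a j) / 2) :=
        sum_le_sum fun i hi => sum_le_sum fun j hj => hG i hi j hj
    _ = ∑ i ∈ I, ∑ j ∈ I, ρ ^ Nat.dist i j * a i := by
        simp only [mul_div_assoc', mul_add, ← sum_div, sum_add_distrib, symmetrize]
        ring
    _ = ∑ i ∈ I, (∑ j ∈ I, ρ ^ Nat.dist i j) * a i := by simp only [sum_mul]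
    _ ≤ ∑ i ∈ I, (1 + ρ) / (1 - ρ) * a i := sum_le_sum fun i hi =>
        mul_le_mul_of_nonneg_right (sum_pow_dist_le h0 h1 I i) (ha i hi)
    _ = (1 + ρ) / (1 - ρ) * ∑ i ∈ I, a i := (mul_sum ..).symm

end Averages

/-- The `q`-analogue `1 + q + ⋯ + q ^ (n - 1)` of `n`: the number of lines, and of hyperplanes, of
an `n`-dimensional vector space over a field with `q` elements. -/
def qNumber (q n : ℕ) : ℕ := ∑ i ∈ range n, q ^ i

lemma qNumber_succ (q n : ℕ) : qNumber q (n + 1) = q * qNumber q n + 1 := geom_sum_succ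

lemma qNumber_succ_pos (q n : ℕ) : 0 < qNumber q (n + 1) := by
  rw [qNumber_succ]
  exact Nat.succ_pos _

lemma mul_qNumber_mul_qNumber_le {q : ℕ} (hq : 0 < q) (m n : ℕ) :
    (q * qNumber q m * qNumber q n : ℝ) ≤
      (q : ℝ)⁻¹ * (qNumber q (m + 1) * qNumber q (n + 1)) := by
  have hm : (q * qNumber q m : ℝ) ≤ qNumber q (m + 1) := by simp [qNumber_succ]
  have hn : (q * qNumber q n : ℝ) ≤ qNumber q (n + 1) := by simp [qNumber_succ]
  calc (q * qNumber q m * qNumber q n : ℝ)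
      = (q : ℝ)⁻¹ * ((q * qNumber q m) * (q * qNumber q n)) := by field_simp
    _ ≤ (q : ℝ)⁻¹ * (qNumber q (m + 1) * qNumber q (n + 1)) := by gcongr

section Intervals

open scoped LinearAlgebra.Projectivization

variable {F V : Type*} [Field F] [AddCommGroup V] [Module F V]

lemma exists_submodule_finrank_eq [FiniteDimensional F V] {l : ℕ} (hl : l ≤ finrank F V) :
    ∃ W : Submodule F V, finrank F W = l := by
  obtain ⟨φ, hφ⟩ := (finrank_le_iff_exists_linearMap (R := F) (M := Fin l → F)
    (M' := V)).1 (by simpa using hl)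
  exact ⟨φ.range, by simp [LinearMap.finrank_range_of_inj hφ]⟩

lemma natCard_hyperplanes_eq [FiniteDimensional F V] {m : ℕ} (hm : m + 1 = finrank F V) :
    Nat.card {H : Submodule F V // finrank F H = m} = Nat.card (ℙ F (Dual F V)) := by
  refine Nat.card_congr ((Subspace.orderIsoFiniteDimensional.toEquiv.subtypeEquiv fun H => ?_).trans
    (Projectivization.equivSubmodule F (Dual F V)).symm)
  have := Subspace.finrank_add_finrank_dualAnnihilator_eq H
  change finrank F H = m ↔ finrank F H.dualAnnihilator = 1
  omega

lemma finrank_comap_mkQ [FiniteDimensional F V] (A : Submodule F V) (L : Submodule F (V ⧸ A)) :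
    finrank F (L.comap A.mkQ) = finrank F L + finrank F A := by
  have hA : A ≤ L.comap A.mkQ := Submodule.le_comap_mkQ A L
  have e := (Submodule.quotientQuotientEquivQuotient A (L.comap A.mkQ) hA).finrank_eq
  rw [Submodule.map_comap_eq_of_surjective A.mkQ_surjective] at e
  have := L.finrank_quotient_add_finrank
  have := A.finrank_quotient_add_finrank
  have := (L.comap A.mkQ).finrank_quotient_add_finrank
  omega

variable [Finite V]

/-- The subspaces of dimension `k` lying between `A` and `B`. -/
noncomputable def intervalLevel (A B : Submodule F V) (k : ℕ) : Finset (Submodule F V) :=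
  (Set.toFinite {W : Submodule F V | A ≤ W ∧ W ≤ B ∧ finrank F W = k}).toFinset

@[simp]
lemma mem_intervalLevel {A B W : Submodule F V} {k : ℕ} :
    W ∈ intervalLevel A B k ↔ A ≤ W ∧ W ≤ B ∧ finrank F W = k := by
  simp [intervalLevel]

lemma card_intervalLevel_eq_natCard {A B : Submodule F V} (h : A ≤ B) (l : ℕ) :
    #(intervalLevel A B (finrank F A + l)) =
      Nat.card {L : Submodule F (B ⧸ A.submoduleOf B) // finrank F L = l} := by
  set lift : Submodule F (B ⧸ A.submoduleOf B) → Submodule F V :=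
    fun L => (L.comap (A.submoduleOf B).mkQ).map B.subtype
  have lift_injective : Function.Injective lift :=
    (Submodule.map_injective_of_injective B.injective_subtype).comp
      (Submodule.comap_injective_of_surjective (Submodule.mkQ_surjective _))
  have finrank_lift (L) : finrank F (lift L) = finrank F L + finrank F A := by
    rw [Submodule.finrank_map_subtype_eq, finrank_comap_mkQ,
      (Submodule.submoduleOfEquivOfLe h).finrank_eq]
  have lift_surjOn {W : Submodule F V} (hA : A ≤ W) (hB : W ≤ B) : ∃ L, lift L = W := by
    refine ⟨(W.submoduleOf B).map (A.submoduleOf B).mkQ, ?_⟩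
    have : A.submoduleOf B ≤ W.submoduleOf B := Submodule.comap_mono hA
    simp only [lift, Submodule.comap_map_mkQ, sup_eq_right.2 this]
    exact Submodule.map_comap_eq_of_le (by simpa using hB)
  have le_lift (L) : A ≤ lift L := by
    have := Submodule.map_mono (f := B.subtype) (Submodule.le_comap_mkQ (A.submoduleOf B) L)
    exact (Submodule.map_comap_eq_of_le (f := B.subtype) (by simpa using h)).ge.trans this
  have image_eq : {W | A ≤ W ∧ W ≤ B ∧ finrank F W = finrank F A + l} =
      lift '' {L | finrank F L = l} := by
    ext W
    constructor
    · rintro ⟨hA, hB, hW⟩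
      obtain ⟨L, rfl⟩ := lift_surjOn hA hB
      exact ⟨L, by have := finrank_lift L; simp only [Set.mem_ofPred_eq]; omega, rfl⟩
    · rintro ⟨L, rfl, rfl⟩
      exact ⟨le_lift L, Submodule.map_subtype_le _ _, by rw [finrank_lift, add_comm]⟩
  rw [intervalLevel, ← Set.ncard_eq_toFinset_card, image_eq,
    Set.ncard_image_of_injective _ lift_injective, ← Nat.card_coe_set_eq, Set.coe_ofPred]

lemma finrank_quotient_submoduleOf_add_finrank {A B : Submodule F V} (h : A ≤ B) :
    finrank F (B ⧸ A.submoduleOf B) + finrank F A = finrank F B := by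
  rw [← (Submodule.submoduleOfEquivOfLe h).finrank_eq, Submodule.finrank_quotient_add_finrank]

lemma intervalLevel_finrank_left {A B : Submodule F V} (h : A ≤ B) :
    intervalLevel A B (finrank F A) = {A} := by
  ext W
  rw [mem_intervalLevel, mem_singleton]
  exact ⟨fun hW => (Submodule.eq_of_le_of_finrank_eq hW.1 hW.2.2.symm).symm,
    by rintro rfl; exact ⟨le_rfl, h, rfl⟩⟩

lemma intervalLevel_finrank_right {A B : Submodule F V} (h : A ≤ B) :
    intervalLevel A B (finrank F B) = {B} := by
  ext W
  rw [mem_intervalLevel, mem_singleton]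
  exact ⟨fun hW => Submodule.eq_of_le_of_finrank_eq hW.2.1 hW.2.2,
    by rintro rfl; exact ⟨h, le_rfl, rfl⟩⟩

lemma intervalLevel_eq_empty_of_lt_left {A : Submodule F V} {k : ℕ} (h : k < finrank F A)
    (B : Submodule F V) : intervalLevel A B k = ∅ := by
  refine eq_empty_of_forall_notMem fun W hW => h.not_ge ?_
  rw [mem_intervalLevel] at hW
  exact hW.2.2 ▸ Submodule.finrank_mono hW.1

lemma intervalLevel_eq_empty_of_right_lt {B : Submodule F V} {k : ℕ} (h : finrank F B < k)
    (A : Submodule F V) : intervalLevel A B k = ∅ := by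
  refine eq_empty_of_forall_notMem fun W hW => h.not_ge ?_
  rw [mem_intervalLevel] at hW
  exact hW.2.2 ▸ Submodule.finrank_mono hW.2.1

lemma intervalLevel_nonempty {A B : Submodule F V} (h : A ≤ B) {k : ℕ} (hA : finrank F A ≤ k)
    (hB : k ≤ finrank F B) : (intervalLevel A B k).Nonempty := by
  obtain ⟨l, rfl⟩ := Nat.exists_eq_add_of_le hA
  have := finrank_quotient_submoduleOf_add_finrank h
  obtain ⟨L, hL⟩ := exists_submodule_finrank_eq (F := F) (V := B ⧸ A.submoduleOf B) (l := l)
    (by omega)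
  have : Finite (B ⧸ A.submoduleOf B) := Quotient.finite _
  have : Nonempty {L : Submodule F (B ⧸ A.submoduleOf B) // finrank F L = l} := ⟨⟨L, hL⟩⟩
  rw [← card_pos, card_intervalLevel_eq_natCard h]
  exact Nat.card_pos

lemma card_intervalLevel_eq_of_finrank_eq {A B A' B' : Submodule F V} (h : A ≤ B) (h' : A' ≤ B')
    (hA : finrank F A = finrank F A') (hB : finrank F B = finrank F B') (k : ℕ) :
    #(intervalLevel A B k) = #(intervalLevel A' B' k) := by
  obtain hk | hk := lt_or_ge k (finrank F A)
  · rw [intervalLevel_eq_empty_of_lt_left hk, intervalLevel_eq_empty_of_lt_left (hA ▸ hk)]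
  obtain ⟨l, rfl⟩ := Nat.exists_eq_add_of_le hk
  have := finrank_quotient_submoduleOf_add_finrank h
  have := finrank_quotient_submoduleOf_add_finrank h'
  let e : (B ⧸ A.submoduleOf B) ≃ₗ[F] B' ⧸ A'.submoduleOf B' :=
    LinearEquiv.ofFinrankEq _ _ (by omega)
  rw [card_intervalLevel_eq_natCard h, hA, card_intervalLevel_eq_natCard h']
  exact Nat.card_congr ((Submodule.orderIsoMapComap e).toEquiv.subtypeEquiv fun L => by
    rw [← e.finrank_map_eq L]; rfl)

lemma mem_intervalLevel_comm {A B x y : Submodule F V} {i j : ℕ} :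
    x ∈ intervalLevel A B i ∧ y ∈ intervalLevel x B j ↔
      x ∈ intervalLevel A y i ∧ y ∈ intervalLevel A B j := by
  simp only [mem_intervalLevel]
  constructor
  · rintro ⟨⟨hAx, -, hx⟩, hxy, hyB, hy⟩
    exact ⟨⟨hAx, hxy, hx⟩, hAx.trans hxy, hyB, hy⟩
  · rintro ⟨⟨hAx, hxy, hx⟩, -, hyB, hy⟩
    exact ⟨⟨hAx, hxy.trans hyB, hx⟩, hxy, hyB, hy⟩

lemma card_intervalLevel_sup_eq_card_intervalLevel_inf {A B x₁ x₂ : Submodule F V} {k : ℕ}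
    (h₁ : x₁ ∈ intervalLevel A B (k + 1)) (h₂ : x₂ ∈ intervalLevel A B (k + 1)) (hne : x₁ ≠ x₂) :
    #(intervalLevel (x₁ ⊔ x₂) B (k + 2)) = #(intervalLevel A (x₁ ⊓ x₂) k) := by
  rw [mem_intervalLevel] at h₁ h₂
  have modular := Submodule.finrank_sup_add_finrank_inf_eq x₁ x₂
  have inf_lt : finrank F ↑(x₁ ⊓ x₂) < k + 1 := by
    rw [← h₁.2.2]
    refine Submodule.finrank_lt_finrank_of_lt (inf_lt_left.2 fun hle => hne ?_)
    exact Submodule.eq_of_le_of_finrank_eq hle (h₁.2.2.trans h₂.2.2.symm)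
  obtain hk | hk := (Nat.le_of_lt_succ inf_lt).eq_or_lt
  · have hsup : finrank F ↑(x₁ ⊔ x₂) = k + 2 := by omega
    rw [← hsup, intervalLevel_finrank_left (sup_le h₁.2.1 h₂.2.1), ← hk,
      intervalLevel_finrank_right (le_inf h₁.1 h₂.1), card_singleton, card_singleton]
  · rw [intervalLevel_eq_empty_of_right_lt hk, intervalLevel_eq_empty_of_lt_left (by omega)]

variable [Finite F]

lemma card_intervalLevel_finrank_add_one {A B : Submodule F V} (h : A ≤ B) {n : ℕ}
    (hn : finrank F A + n = finrank F B) :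
    #(intervalLevel A B (finrank F A + 1)) = qNumber (Nat.card F) n := by
  have := finrank_quotient_submoduleOf_add_finrank h
  rw [card_intervalLevel_eq_natCard h, ← Nat.card_congr (Projectivization.equivSubmodule F _),
    Projectivization.card_of_finrank (n := n) F _ (by omega), qNumber]

lemma card_intervalLevel_add_one_eq_finrank {A B : Submodule F V} (h : A ≤ B) {n : ℕ}
    (hn : finrank F A + n + 1 = finrank F B) :
    #(intervalLevel A B (finrank F A + n)) = qNumber (Nat.card F) (n + 1) := by
  have := finrank_quotient_submoduleOf_add_finrank h
  rw [card_intervalLevel_eq_natCard h, natCard_hyperplanes_eq (by omega),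
    Projectivization.card_of_finrank (n := n + 1) F _ (by rw [Subspace.dual_finrank_eq]; omega),
    qNumber]

lemma sum_card_intervalLevel_sup_mul_eq {A B : Submodule F V} {l m : ℕ}
    (hm : finrank F A + l + 1 + m = finrank F B) {x : Submodule F V}
    (hx : x ∈ intervalLevel A B (finrank F A + l + 1)) (f : Submodule F V → ℝ) :
    ∑ y ∈ intervalLevel A B (finrank F A + l + 1),
        #(intervalLevel (x ⊔ y) B (finrank F A + l + 2)) * (f x * f y) =
      ∑ y ∈ intervalLevel A B (finrank F A + l + 1),
        #(intervalLevel A (x ⊓ y) (finrank F A + l)) * (f x * f y) +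
      (qNumber (Nat.card F) m - qNumber (Nat.card F) (l + 1)) * f x ^ 2 := by
  obtain ⟨hAx, hxB, hkx⟩ := mem_intervalLevel.1 hx
  have card_up : #(intervalLevel x B (finrank F A + l + 2)) = qNumber (Nat.card F) m := by
    rw [show finrank F A + l + 2 = finrank F x + 1 by omega]
    exact card_intervalLevel_finrank_add_one hxB (by omega)
  have card_down : #(intervalLevel A x (finrank F A + l)) = qNumber (Nat.card F) (l + 1) :=
    card_intervalLevel_add_one_eq_finrank hAx (by omega)
  rw [← add_sum_erase _ _ hx, ← add_sum_erase _ _ hx, sup_idem, inf_idem, card_up, card_down,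
    sum_congr rfl fun y hy => by rw [card_intervalLevel_sup_eq_card_intervalLevel_inf hx
      (mem_of_mem_erase hy) (ne_of_mem_erase hy).symm]]
  ring

/-- The operators "down then up" and "up then down" on a level differ by a scalar, because two
distinct subspaces of the same dimension have a common cover precisely when they cover a common
subspace. -/
lemma sum_sq_sum_down_eq_sum_sq_sum_up_add {A B : Submodule F V} {l m : ℕ}
    (hm : finrank F A + l + 1 + m = finrank F B) (f : Submodule F V → ℝ) :
    ∑ z ∈ intervalLevel A B (finrank F A + l + 2),
        (∑ x ∈ intervalLevel A z (finrank F A + l + 1), f x) ^ 2 =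
      ∑ w ∈ intervalLevel A B (finrank F A + l),
        (∑ x ∈ intervalLevel w B (finrank F A + l + 1), f x) ^ 2 +
      (qNumber (Nat.card F) m - qNumber (Nat.card F) (l + 1)) *
        ∑ x ∈ intervalLevel A B (finrank F A + l + 1), f x ^ 2 := by
  set k := finrank F A + l
  set X := intervalLevel A B (k + 1)
  have down := sum_sq_sum_eq (X := X) (Y := intervalLevel A B (k + 2))
    (N := fun z => intervalLevel A z (k + 1))
    (C := fun x₁ x₂ => intervalLevel (x₁ ⊔ x₂) B (k + 2))
    (fun z x₁ x₂ => by
      simp only [X, mem_intervalLevel, sup_le_iff]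
      constructor
      · rintro ⟨⟨-, hB, hz⟩, ⟨h₁, h₁', e₁⟩, h₂, h₂', e₂⟩
        exact ⟨⟨⟨h₁', h₂'⟩, hB, hz⟩, ⟨h₁, h₁'.trans hB, e₁⟩, h₂, h₂'.trans hB, e₂⟩
      · rintro ⟨⟨⟨h₁', h₂'⟩, hB, hz⟩, ⟨h₁, -, e₁⟩, h₂, -, e₂⟩
        exact ⟨⟨h₁.trans h₁', hB, hz⟩, ⟨h₁, h₁', e₁⟩, h₂, h₂', e₂⟩) f
  have up := sum_sq_sum_eq (X := X) (Y := intervalLevel A B k)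
    (N := fun w => intervalLevel w B (k + 1)) (C := fun x₁ x₂ => intervalLevel A (x₁ ⊓ x₂) k)
    (fun w x₁ x₂ => by
      simp only [X, mem_intervalLevel, le_inf_iff]
      constructor
      · rintro ⟨⟨hA, -, hw⟩, ⟨h₁, h₁', e₁⟩, h₂, h₂', e₂⟩
        exact ⟨⟨hA, ⟨h₁, h₂⟩, hw⟩, ⟨hA.trans h₁, h₁', e₁⟩, hA.trans h₂, h₂', e₂⟩
      · rintro ⟨⟨hA, ⟨h₁, h₂⟩, hw⟩, ⟨-, h₁', e₁⟩, -, h₂', e₂⟩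
        exact ⟨⟨hA, h₁.trans h₁', hw⟩, ⟨h₁, h₁', e₁⟩, h₂, h₂', e₂⟩) f
  rw [down, up, sum_congr rfl fun x hx => sum_card_intervalLevel_sup_mul_eq hm hx f,
    sum_add_distrib, mul_sum]

lemma sum_sq_sum_intervalLevel_le {A B : Submodule F V} (l m : ℕ)
    (hm : finrank F A + l + m + 1 = finrank F B) (f : Submodule F V → ℝ)
    (hf : ∑ x ∈ intervalLevel A B (finrank F A + l), f x = 0) :
    ∑ y ∈ intervalLevel A B (finrank F A + l + 1),
        (∑ x ∈ intervalLevel A y (finrank F A + l), f x) ^ 2 ≤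
      Nat.card F * qNumber (Nat.card F) l * qNumber (Nat.card F) m *
        ∑ x ∈ intervalLevel A B (finrank F A + l), f x ^ 2 := by
  induction l generalizing m f with
  | zero =>
    refine (sum_eq_zero fun y hy => ?_).trans_le (by simp [qNumber])
    have hy := mem_intervalLevel.1 hy
    rw [add_zero, intervalLevel_finrank_left (hy.1.trans hy.2.1), sum_singleton] at hf
    rw [add_zero, intervalLevel_finrank_left hy.1, sum_singleton, hf, sq, zero_mul]
  | succ l ih =>
    set k := finrank F A + l with hk
    set q := Nat.card F with hq
    have hmean : ∑ w ∈ intervalLevel A B k, ∑ x ∈ intervalLevel w B (k + 1), f x = 0 := by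
      have card_down : ∀ x ∈ intervalLevel A B (k + 1),
          #(intervalLevel A x k) = qNumber q (l + 1) := fun x hx => by
        obtain ⟨hAx, -, hkx⟩ := mem_intervalLevel.1 hx
        exact card_intervalLevel_add_one_eq_finrank hAx (by omega)
      rw [sum_comm' fun w x => mem_intervalLevel_comm]
      simp only [sum_const, nsmul_eq_mul]
      rw [sum_congr rfl fun x hx => by rw [card_down x hx], ← mul_sum, hk, add_assoc, hf, mul_zero]
    have up : ∑ w ∈ intervalLevel A B k, (∑ x ∈ intervalLevel w B (k + 1), f x) ^ 2 ≤
        q * qNumber q l * qNumber q (m + 1) * ∑ x ∈ intervalLevel A B (k + 1), f x ^ 2 :=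
      sum_sq_sum_le_of_adjoint (fun w x => mem_intervalLevel_comm) (by positivity)
        (ih (m + 1) (by omega) _ hmean)
    have commutation := sum_sq_sum_down_eq_sum_sq_sum_up_add (l := l) (m := m + 1) (by omega) f
    rw [← hk, ← hq] at commutation
    calc _ = _ := commutation
      _ ≤ _ := add_le_add_left up _
      _ = q * qNumber q (l + 1) * qNumber q m * ∑ x ∈ intervalLevel A B (k + 1), f x ^ 2 := by
        push_cast [qNumber_succ]
        ring

lemma expect_sq_expect_intervalLevel_le {A B : Submodule F V} (h : A ≤ B) {k : ℕ}
    (hA : finrank F A ≤ k) (hB : k + 1 ≤ finrank F B) {f : Submodule F V → ℝ}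
    (hf : 𝔼 x ∈ intervalLevel A B k, f x = 0) :
    𝔼 y ∈ intervalLevel A B (k + 1), (𝔼 x ∈ intervalLevel A y k, f x) ^ 2 ≤
      (Nat.card F : ℝ)⁻¹ * 𝔼 x ∈ intervalLevel A B k, f x ^ 2 := by
  obtain ⟨l, rfl⟩ := Nat.exists_eq_add_of_le hA
  obtain ⟨m, hm⟩ := Nat.exists_eq_add_of_le hB
  set k := finrank F A + l
  set q := Nat.card F
  set X := intervalLevel A B k
  set Y := intervalLevel A B (k + 1)
  have card_down : ∀ y ∈ Y, #(intervalLevel A y k) = qNumber q (l + 1) := fun y hy => by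
    obtain ⟨hAy, -, hky⟩ := mem_intervalLevel.1 hy
    exact card_intervalLevel_add_one_eq_finrank hAy hky.symm
  have card_up : ∀ x ∈ X, #(intervalLevel x B (k + 1)) = qNumber q (m + 1) := fun x hx => by
    obtain ⟨-, hxB, hkx⟩ := mem_intervalLevel.1 hx
    rw [← hkx]
    exact card_intervalLevel_finrank_add_one hxB (by omega)
  have hq_pos : 0 < q := Nat.card_pos
  have hX : (0 : ℝ) < #X := by
    exact_mod_cast (intervalLevel_nonempty h hA (by omega)).card_pos
  have hl_pos : (0 : ℝ) < qNumber q (l + 1) := mod_cast qNumber_succ_pos q l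
  have hm_pos : (0 : ℝ) < qNumber q (m + 1) := mod_cast qNumber_succ_pos q m
  have hf' : ∑ x ∈ X, f x = 0 := by
    rwa [expect_eq_sum_div_card, div_eq_zero_iff, or_iff_left hX.ne'] at hf
  calc 𝔼 y ∈ Y, (𝔼 x ∈ intervalLevel A y k, f x) ^ 2
      = (∑ y ∈ Y, (∑ x ∈ intervalLevel A y k, f x) ^ 2) /
          (#X * (qNumber q (l + 1) * qNumber q (m + 1))) :=
        expect_sq_expect_eq_of_card_eq (fun x y => mem_intervalLevel_comm) card_up card_down f
    _ ≤ ((q : ℝ)⁻¹ * (qNumber q (l + 1) * qNumber q (m + 1)) * ∑ x ∈ X, f x ^ 2) /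
          (#X * (qNumber q (l + 1) * qNumber q (m + 1))) := by
        gcongr
        exact (sum_sq_sum_intervalLevel_le l m (by omega) f hf').trans
          (mul_le_mul_of_nonneg_right (mul_qNumber_mul_qNumber_le hq_pos l m)
            (sum_nonneg fun _ _ => sq_nonneg _))
    _ = (q : ℝ)⁻¹ * 𝔼 x ∈ X, f x ^ 2 := by
        rw [expect_eq_sum_div_card]
        field_simp

end Intervals

section Chains

lemma sup_id_eq_bot_or_mem {α : Type*} [SemilatticeSup α] [OrderBot α] {c : Finset α}
    (hc : IsChain (· ≤ ·) (c : Set α)) : c.sup id = ⊥ ∨ c.sup id ∈ c := by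
  refine sup_induction (p := fun W => W = ⊥ ∨ W ∈ c) (.inl rfl) ?_ fun U hU => .inr hU
  rintro W (rfl | hW) W' (rfl | hW')
  · simp
  · simp [hW']
  · simp [hW]
  · obtain hle | hle := hc.total hW hW'
    · simp [hle, hW']
    · simp [hle, hW]

lemma inf_id_eq_top_or_mem {α : Type*} [SemilatticeInf α] [OrderTop α] {c : Finset α}
    (hc : IsChain (· ≤ ·) (c : Set α)) : c.inf id = ⊤ ∨ c.inf id ∈ c :=
  sup_id_eq_bot_or_mem (α := αᵒᵈ) hc.symm

variable {F V : Type*} [Field F] [AddCommGroup V] [Module F V]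

/-- The type of a flag: the set of dimensions of its members. -/
noncomputable def dims (t : Finset (Submodule F V)) : Finset ℕ :=
  t.image fun U : Submodule F V => finrank F U

lemma dims_insert (U : Submodule F V) (t : Finset (Submodule F V)) :
    dims (insert U t) = insert (finrank F U) (dims t) := image_insert ..

lemma finrank_sup_le_iff [FiniteDimensional F V] {c : Finset (Submodule F V)}
    (hc : IsChain (· ≤ ·) (c : Set (Submodule F V))) {m : ℕ} :
    finrank F ↑(c.sup id) ≤ m ↔ ∀ U ∈ c, finrank F U ≤ m := by
  refine ⟨fun h U hU => (Submodule.finrank_mono (le_sup (f := id) hU)).trans h, fun h => ?_⟩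
  obtain h0 | hmem := sup_id_eq_bot_or_mem hc
  · rw [h0, finrank_bot]
    exact m.zero_le
  · exact h _ hmem

lemma le_finrank_inf_iff [FiniteDimensional F V] {c : Finset (Submodule F V)}
    (hc : IsChain (· ≤ ·) (c : Set (Submodule F V))) {m : ℕ} :
    m ≤ finrank F ↑(c.inf id) ↔ m ≤ finrank F V ∧ ∀ U ∈ c, m ≤ finrank F U := by
  refine ⟨fun h => ⟨h.trans (Submodule.finrank_le _), fun U hU =>
    h.trans (Submodule.finrank_mono (inf_le (f := id) hU))⟩, fun h => ?_⟩
  obtain h0 | hmem := inf_id_eq_top_or_mem hc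
  · rw [h0, finrank_top]
    exact h.1
  · exact h.2 _ hmem

/-- The largest member of dimension at most `i` of the chain `t`, and `⊥` if there is none. The
subspaces of dimension `i` or `i + 1` compatible with `t` are those between it and
`upperNeighbor t i`. -/
noncomputable def lowerNeighbor (t : Finset (Submodule F V)) (i : ℕ) : Submodule F V :=
  (t.filter fun U : Submodule F V => finrank F U ≤ i).sup id

/-- The smallest member of dimension above `i` of the chain `t`, and `⊤` if there is none. -/
noncomputable def upperNeighbor (t : Finset (Submodule F V)) (i : ℕ) : Submodule F V :=
  (t.filter fun U : Submodule F V => i < finrank F U).inf id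

variable {t t' : Finset (Submodule F V)} {i : ℕ}

lemma finrank_lowerNeighbor_le_iff [FiniteDimensional F V]
    (ht : IsChain (· ≤ ·) (t : Set (Submodule F V))) {m : ℕ} :
    finrank F (lowerNeighbor t i) ≤ m ↔ ∀ n ∈ dims t, n ≤ i → n ≤ m := by
  rw [lowerNeighbor, finrank_sup_le_iff (ht.mono (coe_subset.2 (filter_subset _ _)))]
  simp [dims]

lemma le_finrank_upperNeighbor_iff [FiniteDimensional F V]
    (ht : IsChain (· ≤ ·) (t : Set (Submodule F V))) {m : ℕ} :
    m ≤ finrank F (upperNeighbor t i) ↔ m ≤ finrank F V ∧ ∀ n ∈ dims t, i < n → m ≤ n := by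
  rw [upperNeighbor, le_finrank_inf_iff (ht.mono (coe_subset.2 (filter_subset _ _)))]
  simp [dims]

variable [Finite V]

lemma lowerNeighbor_le_upperNeighbor (ht : IsChain (· ≤ ·) (t : Set (Submodule F V))) :
    lowerNeighbor t i ≤ upperNeighbor t i := by
  refine Finset.sup_le fun U hU => Finset.le_inf fun W hW => ?_
  rw [mem_filter] at hU hW
  refine (ht.total hU.1 hW.1).resolve_right fun hle => ?_
  have := Submodule.finrank_mono hle
  omega

/-- The subspaces of dimension `i` comparable with every member of `t`; for a chain `t` these are
the subspaces of dimension `i` that can be added to it. -/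
noncomputable def level (t : Finset (Submodule F V)) (i : ℕ) : Finset (Submodule F V) :=
  (Set.toFinite {W : Submodule F V | finrank F W = i ∧ ∀ U ∈ t, W ≤ U ∨ U ≤ W}).toFinset

@[simp]
lemma mem_level {W : Submodule F V} :
    W ∈ level t i ↔ finrank F W = i ∧ ∀ U ∈ t, W ≤ U ∨ U ≤ W := by
  simp [level]

lemma isChain_insert_of_mem_level {W : Submodule F V}
    (ht : IsChain (· ≤ ·) (t : Set (Submodule F V))) (hW : W ∈ level t i) :
    IsChain (· ≤ ·) ((insert W t : Finset (Submodule F V)) : Set (Submodule F V)) := by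
  rw [coe_insert]
  exact ht.insert fun U hU _ => (mem_level.1 hW).2 U hU

lemma dims_insert_of_mem_level {W : Submodule F V} (hW : W ∈ level t i) :
    dims (insert W t) = insert i (dims t) := by
  rw [dims_insert, (mem_level.1 hW).1]

lemma card_sdiff_dims_insert_lt {S : Finset ℕ} {W : Submodule F V} (hi : i ∈ S \ dims t)
    (hW : W ∈ level t i) : #(S \ dims (insert W t)) < #(S \ dims t) := by
  rw [dims_insert_of_mem_level hW, sdiff_insert]
  exact card_erase_lt_of_mem hi

lemma mem_level_insert_iff_of_le {x y : Submodule F V} (hi : i ≤ finrank F y) :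
    x ∈ level (insert y t) i ↔ x ≤ y ∧ x ∈ level t i := by
  simp only [mem_level, forall_mem_insert]
  constructor
  · rintro ⟨hx, hxy | hyx, ht⟩
    · exact ⟨hxy, hx, ht⟩
    · exact ⟨(Submodule.eq_of_le_of_finrank_le hyx (hx.trans_le hi)).ge, hx, ht⟩
  · rintro ⟨hxy, hx, ht⟩
    exact ⟨hx, .inl hxy, ht⟩

lemma mem_level_and_mem_level_insert_comm {x y : Submodule F V} {j : ℕ} :
    x ∈ level t i ∧ y ∈ level (insert x t) j ↔ x ∈ level (insert y t) i ∧ y ∈ level t j := by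
  simp only [mem_level, forall_mem_insert, or_comm (a := x ≤ y)]
  tauto

lemma level_eq_intervalLevel {k : ℕ} (hik : i ≤ k) (hki : k ≤ i + 1) :
    level t k = intervalLevel (lowerNeighbor t i) (upperNeighbor t i) k := by
  ext W
  simp only [mem_level, mem_intervalLevel, lowerNeighbor, upperNeighbor, Finset.sup_le_iff,
    Finset.le_inf_iff, mem_filter, id, and_imp]
  constructor
  · rintro ⟨hW, hcomp⟩
    refine ⟨fun U hU hUi => ?_, fun U hU hUi => ?_, hW⟩
    · exact (hcomp U hU).elim (fun h => (Submodule.eq_of_le_of_finrank_le h (by omega)).ge) id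
    · exact (hcomp U hU).elim id fun h => (Submodule.eq_of_le_of_finrank_le h (by omega)).ge
  · rintro ⟨hlow, hup, hW⟩
    exact ⟨hW, fun U hU => (le_or_gt (finrank F U) i).elim (fun h => .inr (hlow U hU h))
      fun h => .inl (hup U hU h)⟩

lemma level_nonempty (ht : IsChain (· ≤ ·) (t : Set (Submodule F V))) (hi : i ≤ finrank F V) :
    (level t i).Nonempty := by
  rw [level_eq_intervalLevel le_rfl i.le_succ]
  refine intervalLevel_nonempty (lowerNeighbor_le_upperNeighbor ht) ?_ ?_
  · exact (finrank_lowerNeighbor_le_iff ht).2 fun _ _ h => h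
  · exact (le_finrank_upperNeighbor_iff ht).2 ⟨hi, fun _ _ h => h.le⟩

lemma card_level_eq_of_dims_eq (ht : IsChain (· ≤ ·) (t : Set (Submodule F V)))
    (ht' : IsChain (· ≤ ·) (t' : Set (Submodule F V))) (h : dims t = dims t') (i : ℕ) :
    #(level t i) = #(level t' i) := by
  rw [level_eq_intervalLevel le_rfl i.le_succ, level_eq_intervalLevel le_rfl i.le_succ]
  refine card_intervalLevel_eq_of_finrank_eq (lowerNeighbor_le_upperNeighbor ht)
    (lowerNeighbor_le_upperNeighbor ht') ?_ ?_ i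
  · exact eq_of_forall_ge_iff fun m => by
      rw [finrank_lowerNeighbor_le_iff ht, finrank_lowerNeighbor_le_iff ht', h]
  · exact eq_of_forall_le_iff fun m => by
      rw [le_finrank_upperNeighbor_iff ht, le_finrank_upperNeighbor_iff ht', h]

lemma card_level_insert_eq {x x' : Submodule F V}
    (ht : IsChain (· ≤ ·) (t : Set (Submodule F V))) (hx : x ∈ level t i) (hx' : x' ∈ level t i)
    (j : ℕ) : #(level (insert x t) j) = #(level (insert x' t) j) :=
  card_level_eq_of_dims_eq (isChain_insert_of_mem_level ht hx) (isChain_insert_of_mem_level ht hx')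
    ((dims_insert_of_mem_level hx).trans (dims_insert_of_mem_level hx').symm) j

lemma expect_level_expect_level_comm (ht : IsChain (· ≤ ·) (t : Set (Submodule F V))) (i j : ℕ)
    (φ : Submodule F V → Submodule F V → ℝ) :
    𝔼 x ∈ level t i, 𝔼 y ∈ level (insert x t) j, φ x y =
      𝔼 y ∈ level t j, 𝔼 x ∈ level (insert y t) i, φ x y :=
  expect_expect_comm_of_card_eq (fun _ _ => mem_level_and_mem_level_insert_comm)
    (fun _ hx _ hx' => card_level_insert_eq ht hx hx' j)
    (fun _ hy _ hy' => card_level_insert_eq ht hy hy' i) φ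

lemma expect_level_expect_level_insert (ht : IsChain (· ≤ ·) (t : Set (Submodule F V))) (i : ℕ)
    {j : ℕ} (hj : j ≤ finrank F V) (f : Submodule F V → ℝ) :
    𝔼 y ∈ level t j, 𝔼 x ∈ level (insert y t) i, f x = 𝔼 x ∈ level t i, f x := by
  rw [← expect_level_expect_level_comm ht i j fun x _ => f x]
  exact expect_congr rfl fun x hx =>
    expect_const (level_nonempty (isChain_insert_of_mem_level ht hx) hj) _

lemma expect_level_insert_expect_level_insert (ht : IsChain (· ≤ ·) (t : Set (Submodule F V)))
    {i j k : ℕ} (hij : i ≤ j) (hjk : j ≤ k) {z : Submodule F V} (hz : z ∈ level t k)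
    (f : Submodule F V → ℝ) :
    𝔼 y ∈ level (insert z t) j, 𝔼 x ∈ level (insert y t) i, f x =
      𝔼 x ∈ level (insert z t) i, f x := by
  have hkz : finrank F z = k := (mem_level.1 hz).1
  rw [← expect_level_expect_level_insert (isChain_insert_of_mem_level ht hz) i
    (hjk.trans (hkz ▸ z.finrank_le)) f]
  refine expect_congr rfl fun y hy => expect_congr ?_ fun _ _ => rfl
  have hjy : finrank F y = j := (mem_level.1 hy).1
  have hyz : y ≤ z := ((mem_level_insert_iff_of_le (hkz ▸ hjk)).1 hy).1
  ext x
  rw [mem_level_insert_iff_of_le (hjy ▸ hij), mem_level_insert_iff_of_le (hjy ▸ hij),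
    mem_level_insert_iff_of_le (hkz ▸ hij.trans hjk)]
  exact ⟨fun h => ⟨h.1, h.1.trans hyz, h.2⟩, fun h => ⟨h.1, h.2.2⟩⟩

variable [Finite F]

lemma expect_sq_expect_level_succ_le (ht : IsChain (· ≤ ·) (t : Set (Submodule F V)))
    (hi : i + 1 ≤ finrank F V) {f : Submodule F V → ℝ} (hf : 𝔼 x ∈ level t i, f x = 0) :
    𝔼 y ∈ level t (i + 1), (𝔼 x ∈ level (insert y t) i, f x) ^ 2 ≤
      (Nat.card F : ℝ)⁻¹ * 𝔼 x ∈ level t i, f x ^ 2 := by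
  have level_i := level_eq_intervalLevel (t := t) le_rfl i.le_succ
  have level_succ := level_eq_intervalLevel (t := t) i.le_succ le_rfl
  set A := lowerNeighbor t i
  set B := upperNeighbor t i
  have level_insert : ∀ y ∈ level t (i + 1), level (insert y t) i = intervalLevel A y i := by
    intro y hy
    ext x
    rw [mem_level_insert_iff_of_le ((mem_level.1 hy).1 ▸ i.le_succ), level_i]
    have hyB := (mem_intervalLevel.1 (level_succ ▸ hy)).2.1
    simp only [mem_intervalLevel]
    exact ⟨fun h => ⟨h.2.1, h.1, h.2.2.2⟩, fun h => ⟨h.2.1, h.1, h.2.1.trans hyB, h.2.2⟩⟩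
  rw [expect_congr rfl fun y hy => by rw [level_insert y hy], level_succ, level_i]
  refine expect_sq_expect_intervalLevel_le (lowerNeighbor_le_upperNeighbor ht) ?_ ?_ (level_i ▸ hf)
  · exact (finrank_lowerNeighbor_le_iff ht).2 fun _ _ h => h
  · exact (le_finrank_upperNeighbor_iff ht).2 ⟨hi, fun _ _ h => h⟩

lemma expect_sq_expect_level_le (ht : IsChain (· ≤ ·) (t : Set (Submodule F V))) (n : ℕ)
    (hn : i + n ≤ finrank F V) {f : Submodule F V → ℝ} (hf : 𝔼 x ∈ level t i, f x = 0) :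
    𝔼 y ∈ level t (i + n), (𝔼 x ∈ level (insert y t) i, f x) ^ 2 ≤
      (Nat.card F : ℝ)⁻¹ ^ n * 𝔼 x ∈ level t i, f x ^ 2 := by
  induction n with
  | zero =>
    rw [pow_zero, one_mul, add_zero]
    refine (expect_congr rfl fun y hy => ?_).le
    have : level (insert y t) i = {y} := by
      ext x
      have hiy := (mem_level.1 hy).1
      rw [mem_level_insert_iff_of_le hiy.ge, mem_singleton]
      constructor
      · rintro ⟨hxy, hx⟩
        exact Submodule.eq_of_le_of_finrank_eq hxy ((mem_level.1 hx).1.trans hiy.symm)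
      · rintro rfl
        exact ⟨le_rfl, hy⟩
    rw [this, expect_singleton]
  | succ n ih =>
    set g : Submodule F V → ℝ := fun y => 𝔼 x ∈ level (insert y t) i, f x
    have hg : 𝔼 y ∈ level t (i + n), g y = 0 := by
      rw [expect_level_expect_level_insert ht i (by omega), hf]
    calc 𝔼 z ∈ level t (i + n + 1), g z ^ 2
        = 𝔼 z ∈ level t (i + n + 1), (𝔼 y ∈ level (insert z t) (i + n), g y) ^ 2 :=
          expect_congr rfl fun z hz => by
            rw [expect_level_insert_expect_level_insert ht (by omega) (by omega) hz]
      _ ≤ (Nat.card F : ℝ)⁻¹ * 𝔼 y ∈ level t (i + n), g y ^ 2 :=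
          expect_sq_expect_level_succ_le ht hn hg
      _ ≤ (Nat.card F : ℝ)⁻¹ * ((Nat.card F : ℝ)⁻¹ ^ n * 𝔼 x ∈ level t i, f x ^ 2) := by
          gcongr
          exact ih (by omega)
      _ = (Nat.card F : ℝ)⁻¹ ^ (n + 1) * 𝔼 x ∈ level t i, f x ^ 2 := by ring

end Chains

section MaximalFaces

section Component

variable {F V : Type*} [Field F] [AddCommGroup V] [Module F V] {T : Finset (Submodule F V)}
  {U : Submodule F V}

/-- The member of dimension `i` of the flag `T`, and `⊥` if there is none. -/
noncomputable def component (T : Finset (Submodule F V)) (i : ℕ) : Submodule F V :=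
  (T.filter fun U : Submodule F V => finrank F U = i).sup id

lemma mem_dims {i : ℕ} : i ∈ dims T ↔ ∃ U ∈ T, finrank F U = i := mem_image

variable [FiniteDimensional F V]

lemma injOn_finrank_of_isChain (hT : IsChain (· ≤ ·) (T : Set (Submodule F V))) :
    Set.InjOn (fun U : Submodule F V => finrank F U) T := fun _ hU _ hW h =>
  (hT.total hU hW).elim (fun hle => Submodule.eq_of_le_of_finrank_eq hle h)
    fun hle => (Submodule.eq_of_le_of_finrank_eq hle h.symm).symm

lemma component_finrank (hT : IsChain (· ≤ ·) (T : Set (Submodule F V))) (hU : U ∈ T) :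
    component T (finrank F U) = U := by
  have : T.filter (fun W : Submodule F V => finrank F W = finrank F U) = {U} := by
    ext W
    rw [mem_filter, mem_singleton]
    constructor
    · rintro ⟨hW, h⟩
      exact injOn_finrank_of_isChain hT hW hU h
    · rintro rfl
      exact ⟨hU, rfl⟩
  rw [component, this, sup_singleton, id]

lemma component_mem (hT : IsChain (· ≤ ·) (T : Set (Submodule F V))) {i : ℕ} (hi : i ∈ dims T) :
    component T i ∈ T := by
  obtain ⟨U, hU, rfl⟩ := mem_dims.1 hi
  rwa [component_finrank hT hU]

lemma finrank_component (hT : IsChain (· ≤ ·) (T : Set (Submodule F V))) {i : ℕ}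
    (hi : i ∈ dims T) : finrank F (component T i) = i := by
  obtain ⟨U, hU, rfl⟩ := mem_dims.1 hi
  rw [component_finrank hT hU]

end Component

lemma inv_sqrt_natCard_lt_one (K : Type*) [Finite K] [Nontrivial K] :
    (√(Nat.card K))⁻¹ < 1 :=
  inv_lt_one_of_one_lt₀ (Real.lt_sqrt_of_sq_lt (by simpa using Finite.one_lt_card (α := K)))

variable {F : Type} [Field F] [Fintype F] {d : ℕ} {S : Finset ℕ}
  {s t t' T : Finset (Submodule F (Fin d → F))} {i j : ℕ}

lemma mem_maxFacesAbove : T ∈ maxFacesAbove F d S s ↔ IsMaxFlagFace F d S T ∧ s ⊆ T := by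
  simp [maxFacesAbove]

lemma dims_subset (hs : IsFlagFace F d S s) : dims s ⊆ S := image_subset_iff.2 hs.2

lemma subset_dims (hT : IsMaxFlagFace F d S T) : S ⊆ dims T := fun i hi => mem_dims.2 (hT.2 i hi)

lemma card_dims (hs : IsFlagFace F d S s) : #(dims s) = #s :=
  card_image_of_injOn (injOn_finrank_of_isChain hs.1)

lemma isFlagFace_insert_of_mem_level {x : Submodule F (Fin d → F)} (ht : IsFlagFace F d S t)
    (hi : i ∈ S) (hx : x ∈ level t i) : IsFlagFace F d S (insert x t) :=
  ⟨isChain_insert_of_mem_level ht.1 hx,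
    forall_mem_insert .. |>.2 ⟨(mem_level.1 hx).1.symm ▸ hi, ht.2⟩⟩

lemma maxFacesAbove_eq_singleton (ht : IsFlagFace F d S t) (hS : S ⊆ dims t) :
    maxFacesAbove F d S t = {t} := by
  ext T
  rw [mem_maxFacesAbove, mem_singleton]
  constructor
  · rintro ⟨hT, htT⟩
    refine Subset.antisymm (fun U hU => ?_) htT
    obtain ⟨W, hW, hWU⟩ := mem_dims.1 (hS (hT.1.2 U hU))
    rwa [← injOn_finrank_of_isChain hT.1.1 (htT hW) hU hWU]
  · rintro rfl
    exact ⟨⟨ht, fun i hi => mem_dims.1 (hS hi)⟩, Subset.refl _⟩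

lemma mem_maxFacesAbove_and_eq_component_iff {x : Submodule F (Fin d → F)} (hi : i ∈ S) :
    T ∈ maxFacesAbove F d S s ∧ x ∈ ({component T i} : Finset (Submodule F (Fin d → F))) ↔
      T ∈ maxFacesAbove F d S (insert x s) ∧ x ∈ level s i := by
  simp only [mem_maxFacesAbove, mem_singleton, insert_subset_iff]
  constructor
  · rintro ⟨⟨hT, hsT⟩, rfl⟩
    have hmem := component_mem hT.1.1 (subset_dims hT hi)
    exact ⟨⟨hT, hmem, hsT⟩, mem_level.2 ⟨finrank_component hT.1.1 (subset_dims hT hi),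
      fun U hU => hT.1.1.total hmem (hsT hU)⟩⟩
  · rintro ⟨⟨hT, hxT, hsT⟩, hx⟩
    exact ⟨⟨hT, hsT⟩, by rw [← (mem_level.1 hx).1, component_finrank hT.1.1 hxT]⟩

lemma maxFacesAbove_nonempty (hS : ∀ i ∈ S, i ≤ d) (ht : IsFlagFace F d S t) :
    (maxFacesAbove F d S t).Nonempty := by
  induction hn : #(S \ dims t) using Nat.strong_induction_on generalizing t with
  | _ n ih =>
    obtain hempty | ⟨i, hi⟩ := (S \ dims t).eq_empty_or_nonempty
    · exact maxFacesAbove_eq_singleton ht (sdiff_eq_empty_iff_subset.1 hempty) ▸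
        singleton_nonempty t
    have hiS := (mem_sdiff.1 hi).1
    obtain ⟨x, hx⟩ := level_nonempty (i := i) ht.1 (by simpa using hS i hiS)
    obtain ⟨T, hT⟩ := ih _ (hn ▸ card_sdiff_dims_insert_lt hi hx)
      (isFlagFace_insert_of_mem_level ht hiS hx) rfl
    exact ⟨T, ((mem_maxFacesAbove_and_eq_component_iff hiS).2 ⟨hT, hx⟩).1⟩

lemma card_maxFacesAbove_eq_sum (hi : i ∈ S) :
    #(maxFacesAbove F d S t) = ∑ x ∈ level t i, #(maxFacesAbove F d S (insert x t)) := by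
  calc #(maxFacesAbove F d S t)
      = ∑ T ∈ maxFacesAbove F d S t, ∑ _x ∈ {component T i}, 1 := by simp
    _ = ∑ x ∈ level t i, ∑ _T ∈ maxFacesAbove F d S (insert x t), 1 :=
        sum_comm' fun _ _ => mem_maxFacesAbove_and_eq_component_iff hi
    _ = _ := by simp

lemma card_maxFacesAbove_eq_of_dims_eq (hS : ∀ i ∈ S, i ≤ d) (ht : IsFlagFace F d S t)
    (ht' : IsFlagFace F d S t') (h : dims t = dims t') :
    #(maxFacesAbove F d S t) = #(maxFacesAbove F d S t') := by
  induction hn : #(S \ dims t) using Nat.strong_induction_on generalizing t t' with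
  | _ n ih =>
    obtain hempty | ⟨i, hi⟩ := (S \ dims t).eq_empty_or_nonempty
    · have hSt := sdiff_eq_empty_iff_subset.1 hempty
      rw [maxFacesAbove_eq_singleton ht hSt, maxFacesAbove_eq_singleton ht' (h ▸ hSt),
        card_singleton, card_singleton]
    have hiS := (mem_sdiff.1 hi).1
    have count_eq {r r' : Finset (Submodule F (Fin d → F))} {x x'} (hr : IsFlagFace F d S r)
        (hr' : IsFlagFace F d S r') (hrt : dims r = dims t) (hrt' : dims r' = dims t)
        (hx : x ∈ level r i) (hx' : x' ∈ level r' i) :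
        #(maxFacesAbove F d S (insert x r)) = #(maxFacesAbove F d S (insert x' r')) := by
      refine ih _ ?_ (isFlagFace_insert_of_mem_level hr hiS hx)
        (isFlagFace_insert_of_mem_level hr' hiS hx') ?_ rfl
      · rw [← hn, ← hrt]
        exact card_sdiff_dims_insert_lt (hrt ▸ hi) hx
      · rw [dims_insert_of_mem_level hx, dims_insert_of_mem_level hx', hrt, hrt']
    obtain ⟨x, hx⟩ := level_nonempty (i := i) ht.1 (by simpa using hS i hiS)
    rw [card_maxFacesAbove_eq_sum hiS, card_maxFacesAbove_eq_sum hiS,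
      sum_const_nat fun y hy => count_eq ht ht rfl rfl hy hx,
      sum_const_nat fun y hy => count_eq ht' ht h.symm rfl hy hx,
      card_level_eq_of_dims_eq ht.1 ht'.1 h]

lemma expect_maxFacesAbove_component (hS : ∀ i ∈ S, i ≤ d) (hs : IsFlagFace F d S s) (hi : i ∈ S)
    (φ : Finset (Submodule F (Fin d → F)) → Submodule F (Fin d → F) → ℝ) :
    𝔼 T ∈ maxFacesAbove F d S s, φ T (component T i) =
      𝔼 x ∈ level s i, 𝔼 T ∈ maxFacesAbove F d S (insert x s), φ T x := by
  rw [← expect_expect_comm_of_card_eq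
    (fun T x => mem_maxFacesAbove_and_eq_component_iff (s := s) hi) (fun _ _ _ _ => by simp)
    (fun x hx x' hx' => card_maxFacesAbove_eq_of_dims_eq hS
      (isFlagFace_insert_of_mem_level hs hi hx) (isFlagFace_insert_of_mem_level hs hi hx')
      ((dims_insert_of_mem_level hx).trans (dims_insert_of_mem_level hx').symm)) φ]
  simp only [expect_singleton]

lemma expect_component (hS : ∀ i ∈ S, i ≤ d) (hs : IsFlagFace F d S s) (hi : i ∈ S)
    (f : Submodule F (Fin d → F) → ℝ) :
    𝔼 T ∈ maxFacesAbove F d S s, f (component T i) = 𝔼 x ∈ level s i, f x := by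
  rw [expect_maxFacesAbove_component hS hs hi fun _ x => f x]
  exact expect_congr rfl fun x hx =>
    expect_const (maxFacesAbove_nonempty hS (isFlagFace_insert_of_mem_level hs hi hx)) _

lemma expect_component_mul_component (hS : ∀ i ∈ S, i ≤ d) (hs : IsFlagFace F d S s) (hi : i ∈ S)
    (hj : j ∈ S) (f g : Submodule F (Fin d → F) → ℝ) :
    𝔼 T ∈ maxFacesAbove F d S s, f (component T i) * g (component T j) =
      𝔼 y ∈ level s j, (𝔼 x ∈ level (insert y s) i, f x) * g y := by
  rw [expect_maxFacesAbove_component hS hs hj fun T y => f (component T i) * g y]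
  refine expect_congr rfl fun y hy => ?_
  rw [← expect_mul, expect_component hS (isFlagFace_insert_of_mem_level hs hj hy) hi]

/-- `E[f(Tᵢ) f(Tⱼ)] = ⟪P f, f⟫` where the averaging operator `P` from level `i` to level `j`
contracts by `(√q)⁻¹ ^ (j - i)`; the two norms are separated by AM-GM. -/
lemma expect_component_mul_component_le_of_le (hS : ∀ i ∈ S, i ≤ d) (hs : IsFlagFace F d S s)
    (hi : i ∈ S) (hj : j ∈ S) (hij : i ≤ j) {f : Submodule F (Fin d → F) → ℝ}
    (hf : 𝔼 x ∈ level s i, f x = 0) :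
    𝔼 T ∈ maxFacesAbove F d S s, f (component T i) * f (component T j) ≤
      (√(Nat.card F))⁻¹ ^ (j - i) *
        ((𝔼 x ∈ level s i, f x ^ 2 + 𝔼 x ∈ level s j, f x ^ 2) / 2) := by
  obtain ⟨n, rfl⟩ := Nat.exists_eq_add_of_le hij
  rw [Nat.add_sub_cancel_left]
  set r : ℝ := (√(Nat.card F))⁻¹ ^ n with hr
  have hr_pos : 0 < r := by
    have : 0 < Nat.card F := Nat.card_pos
    positivity
  have hr_sq : (Nat.card F : ℝ)⁻¹ ^ n = r ^ 2 := by
    rw [hr, ← pow_mul, mul_comm n, pow_mul, inv_pow (√_), Real.sq_sqrt (Nat.cast_nonneg _)]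
  set Pf : Submodule F (Fin d → F) → ℝ := fun y => 𝔼 x ∈ level (insert y s) i, f x
  have contraction : 𝔼 y ∈ level s (i + n), Pf y ^ 2 ≤ r ^ 2 * 𝔼 x ∈ level s i, f x ^ 2 :=
    hr_sq ▸ expect_sq_expect_level_le hs.1 n (by simpa using hS _ hj) hf
  have am_gm (u v : ℝ) : u * v ≤ r⁻¹ / 2 * u ^ 2 + r / 2 * v ^ 2 := by
    have : 0 ≤ r⁻¹ / 2 * (u - r * v) ^ 2 := by positivity
    have expand : r⁻¹ / 2 * (u - r * v) ^ 2 = r⁻¹ / 2 * u ^ 2 + r / 2 * v ^ 2 - u * v := by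
      field_simp
      ring
    linarith
  calc 𝔼 T ∈ maxFacesAbove F d S s, f (component T i) * f (component T (i + n))
      = 𝔼 y ∈ level s (i + n), Pf y * f y := expect_component_mul_component hS hs hi hj f f
    _ ≤ 𝔼 y ∈ level s (i + n), (r⁻¹ / 2 * Pf y ^ 2 + r / 2 * f y ^ 2) :=
        expect_le_expect fun y _ => am_gm (Pf y) (f y)
    _ = r⁻¹ / 2 * 𝔼 y ∈ level s (i + n), Pf y ^ 2 + r / 2 * 𝔼 y ∈ level s (i + n), f y ^ 2 := by
        rw [expect_add_distrib, mul_expect, mul_expect]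
    _ ≤ r⁻¹ / 2 * (r ^ 2 * 𝔼 x ∈ level s i, f x ^ 2) +
          r / 2 * 𝔼 y ∈ level s (i + n), f y ^ 2 := by gcongr
    _ = r * ((𝔼 x ∈ level s i, f x ^ 2 + 𝔼 x ∈ level s (i + n), f x ^ 2) / 2) := by
        field_simp

lemma expect_component_mul_component_le (hS : ∀ i ∈ S, i ≤ d) (hs : IsFlagFace F d S s)
    (hi : i ∈ S) (hj : j ∈ S) {f : Submodule F (Fin d → F) → ℝ}
    (hfi : 𝔼 x ∈ level s i, f x = 0) (hfj : 𝔼 x ∈ level s j, f x = 0) :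
    𝔼 T ∈ maxFacesAbove F d S s, f (component T i) * f (component T j) ≤
      (√(Nat.card F))⁻¹ ^ Nat.dist i j *
        ((𝔼 x ∈ level s i, f x ^ 2 + 𝔼 x ∈ level s j, f x ^ 2) / 2) := by
  obtain hij | hji := le_total i j
  · rw [Nat.dist_eq_sub_of_le hij]
    exact expect_component_mul_component_le_of_le hS hs hi hj hij hfi
  · simp only [mul_comm (f (component _ i))]
    rw [Nat.dist_eq_sub_of_le_right hji, add_comm]
    exact expect_component_mul_component_le_of_le hS hs hj hi hji hfj

lemma expect_sq_sum_component_le_of_forall (hS : ∀ i ∈ S, i ≤ d) (hs : IsFlagFace F d S s)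
    {I : Finset ℕ} (hI : I ⊆ S) {f : Submodule F (Fin d → F) → ℝ}
    (hf : ∀ i ∈ I, 𝔼 x ∈ level s i, f x = 0) :
    𝔼 T ∈ maxFacesAbove F d S s, (∑ i ∈ I, f (component T i)) ^ 2 ≤
      (1 + (√(Nat.card F))⁻¹) / (1 - (√(Nat.card F))⁻¹) *
        ∑ i ∈ I, 𝔼 x ∈ level s i, f x ^ 2 := by
  simp only [sq, sum_mul_sum, expect_sum_comm]
  simp only [← sq]
  exact sum_sum_le_of_le_pow_dist (by positivity) (inv_sqrt_natCard_lt_one F)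
    (fun i _ => expect_nonneg fun _ _ => sq_nonneg _)
    fun i hi j hj => expect_component_mul_component_le hS hs (hI hi) (hI hj) (hf i hi) (hf j hj)

/-- The level means of `f` sum to zero, so centering `f` on each level changes no flag sum
`∑ i ∈ I, f Tᵢ`, while it can only decrease the second moments. -/
lemma expect_sq_sum_component_le (hS : ∀ i ∈ S, i ≤ d) (hs : IsFlagFace F d S s)
    {I : Finset ℕ} (hI : I ⊆ S) {f : Submodule F (Fin d → F) → ℝ}
    (hf : ∑ i ∈ I, 𝔼 x ∈ level s i, f x = 0) :
    𝔼 T ∈ maxFacesAbove F d S s, (∑ i ∈ I, f (component T i)) ^ 2 ≤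
      (1 + (√(Nat.card F))⁻¹) / (1 - (√(Nat.card F))⁻¹) *
        ∑ i ∈ I, 𝔼 x ∈ level s i, f x ^ 2 := by
  set g : Submodule F (Fin d → F) → ℝ := fun U => f U - 𝔼 x ∈ level s (finrank F U), f x
  have hg_level {i} {x : Submodule F (Fin d → F)} (hx : x ∈ level s i) :
      g x = f x - 𝔼 y ∈ level s i, f y := by simp only [g, (mem_level.1 hx).1]
  have sum_g : ∀ T ∈ maxFacesAbove F d S s,
      ∑ i ∈ I, f (component T i) = ∑ i ∈ I, g (component T i) := by
    intro T hT
    have hT := (mem_maxFacesAbove.1 hT).1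
    rw [← sub_zero (∑ i ∈ I, f _), ← hf, ← sum_sub_distrib]
    exact sum_congr rfl fun i hi => by
      simp only [g, finrank_component hT.1.1 (subset_dims hT (hI hi))]
  have mean_g : ∀ i ∈ I, 𝔼 x ∈ level s i, g x = 0 := by
    intro i hi
    have hne := level_nonempty (i := i) hs.1 (by simpa using hS i (hI hi))
    rw [expect_congr rfl fun x hx => hg_level hx, expect_sub_distrib, expect_const hne, sub_self]
  have sq_g (i : ℕ) : 𝔼 x ∈ level s i, g x ^ 2 ≤ 𝔼 x ∈ level s i, f x ^ 2 := by
    rw [expect_congr rfl fun x hx => by rw [hg_level hx]]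
    exact expect_sub_expect_sq_le _ f
  have := inv_sqrt_natCard_lt_one F
  rw [expect_congr rfl fun T hT => by rw [sum_g T hT]]
  refine (expect_sq_sum_component_le_of_forall hS hs hI mean_g).trans ?_
  exact mul_le_mul_of_nonneg_left (sum_le_sum fun i _ => sq_g i)
    (div_nonneg (by positivity) (by linarith))

lemma sum_sdiff_eq_sum_component (hT : T ∈ maxFacesAbove F d S s)
    {M : Type*} [AddCommMonoid M] (f : Submodule F (Fin d → F) → M) :
    ∑ U ∈ T \ s, f U = ∑ i ∈ S \ dims s, f (component T i) := by
  obtain ⟨hT, hsT⟩ := mem_maxFacesAbove.1 hT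
  have hST {i} (hi : i ∈ S \ dims s) : i ∈ dims T := subset_dims hT (mem_sdiff.1 hi).1
  refine sum_bij' (fun U _ => finrank F U) (fun i _ => component T i) (fun U hU => ?_)
    (fun i hi => ?_) (fun U hU => component_finrank hT.1.1 (mem_sdiff.1 hU).1)
    (fun i hi => finrank_component hT.1.1 (hST hi))
    fun U hU => by rw [component_finrank hT.1.1 (mem_sdiff.1 hU).1]
  · rw [mem_sdiff] at hU ⊢
    refine ⟨hT.1.2 U hU.1, fun h => hU.2 ?_⟩
    obtain ⟨W, hW, hWU⟩ := mem_dims.1 h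
    rwa [← injOn_finrank_of_isChain hT.1.1 (hsT hW) hU.1 hWU]
  · refine mem_sdiff.2 ⟨component_mem hT.1.1 (hST hi), fun h => (mem_sdiff.1 hi).2 ?_⟩
    exact mem_dims.2 ⟨_, h, finrank_component hT.1.1 (hST hi)⟩

lemma card_sdiff_eq_card_sub_card (hs : IsFlagFace F d S s) (hT : T ∈ maxFacesAbove F d S s) :
    (#(T \ s) : ℝ) = #S - #s := by
  rw [card_eq_sum_ones, sum_sdiff_eq_sum_component hT, ← card_eq_sum_ones,
    card_sdiff_of_subset (dims_subset hs), card_dims hs, Nat.cast_sub]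
  exact card_dims hs ▸ card_le_card (dims_subset hs)

lemma linkVertExp_eq (hS : ∀ i ∈ S, i ≤ d) (hs : IsFlagFace F d S s)
    (f : Submodule F (Fin d → F) → ℝ) :
    linkVertExp F d S s f = (∑ i ∈ S \ dims s, 𝔼 x ∈ level s i, f x) / (#S - #s) := by
  rw [linkVertExp, ← expect_eq_sum_div_card, expect_congr rfl fun T hT => by
    rw [sum_sdiff_eq_sum_component hT, card_sdiff_eq_card_sub_card hs hT],
    ← expect_div, expect_sum_comm]
  congr 1
  exact sum_congr rfl fun i hi => expect_component hS hs (mem_sdiff.1 hi).1 f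

lemma linkPairExp_self_eq (hS : ∀ i ∈ S, i ≤ d) (hs : IsFlagFace F d S s)
    (f : Submodule F (Fin d → F) → ℝ) :
    linkPairExp F d S s f f =
      (𝔼 T ∈ maxFacesAbove F d S s, (∑ i ∈ S \ dims s, f (component T i)) ^ 2 -
          ∑ i ∈ S \ dims s, 𝔼 x ∈ level s i, f x ^ 2) /
        ((#S - #s) * (#S - #s - 1)) := by
  rw [linkPairExp, ← expect_eq_sum_div_card, expect_congr rfl fun T hT => by
    rw [sum_sum_erase_mul_eq, sum_sdiff_eq_sum_component hT, sum_sdiff_eq_sum_component hT,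
      card_sdiff_eq_card_sub_card hs hT], ← expect_div, expect_sub_distrib, expect_sum_comm]
  congr 2
  exact sum_congr rfl fun i hi => expect_component hS hs (mem_sdiff.1 hi).1 fun x => f x ^ 2

end MaximalFaces

end ProjectedFlags

open ProjectedFlags BigOperators in
/-- Spectral expansion of the links of the projected flags complex:
the underlying weighted graph of the link of any face `s` of codimension at least `2`
has normalized second eigenvalue at most `2/((|S|-|s|-1)(√q-1))`, stated in
Rayleigh-quotient form. -/
theorem stmt_1 (q : ℕ) (hq : IsPrimePow q)
    (F : Type) [Field F] [Fintype F] (hF : Fintype.card F = q)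
    (d : ℕ) (hd : 3 ≤ d)
    (S : Finset ℕ) (hS : S ⊆ Finset.Icc 1 (d - 1)) (hScard : 2 ≤ S.card)
    (s : Finset (Submodule F (Fin d → F))) (hs : IsFlagFace F d S s)
    (hcodim : s.card + 2 ≤ S.card)
    (f : Submodule F (Fin d → F) → ℝ)
    (hmean : linkVertExp F d S s f = 0) :
    linkPairExp F d S s f f ≤
      (2 / (((S.card : ℝ) - (s.card : ℝ) - 1) * (Real.sqrt (q : ℝ) - 1))) *
        linkVertExp F d S s (fun U => (f U) ^ 2) := by
  have hSd : ∀ i ∈ S, i ≤ d := fun i hi => (mem_Icc.1 (hS hi)).2.trans (Nat.sub_le d 1)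
  have hk : (#s : ℝ) + 2 ≤ #S := mod_cast hcodim
  have hk₀ : (0 : ℝ) < #S - #s := by linarith
  have hk₁ : (0 : ℝ) < #S - #s - 1 := by linarith
  have hsqrt : 1 < √(q : ℝ) := Real.lt_sqrt_of_sq_lt (by simpa using hq.one_lt)
  rw [linkVertExp_eq hSd hs, div_eq_zero_iff, or_iff_left hk₀.ne'] at hmean
  have flag_sum_bound := expect_sq_sum_component_le hSd hs sdiff_subset hmean
  rw [Nat.card_eq_fintype_card, hF] at flag_sum_bound
  rw [linkPairExp_self_eq hSd hs, linkVertExp_eq hSd hs]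
  set secondMoment := ∑ i ∈ S \ dims s, 𝔼 x ∈ level s i, f x ^ 2
  calc _ ≤ ((1 + (√(q : ℝ))⁻¹) / (1 - (√(q : ℝ))⁻¹) * secondMoment - secondMoment) /
        (((#S : ℝ) - #s) * (#S - #s - 1)) := by gcongr
    _ = _ := by
      have h₁ : √(q : ℝ) - 1 ≠ 0 := by linarith
      field_simp
      ring
end

section
/- Let F be a finite field, d ≥ 1 an integer, and fix a linear order ≤ on the set F^d. For F-linear subspaces M ⊆ N of F^d with c = dim(N) − dim(M), a saturated chain from M to N is a sequence M = W₀ ⊊ W₁ ⊊ ⋯ ⊊ W_c = N of subspaces with dim(W_i) = dim(M) + i for all i; its label is the tuple (v₁,…,v_c) where v_i is the ≤-least element of W_i ∖ W_{i−1}. Then: (i) there is exactly one saturated chain from M to N whose label is strictly increasing (v₁ < v₂ < ⋯ < v_c); and (ii) every other saturated chain from M to N has label strictly greater than the label of this chain in the lexicographic order. -/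
/-- A saturated chain from `M` to `N` (where `c = dim N - dim M`): a sequence
`M = W₀ ⊊ W₁ ⊊ ⋯ ⊊ W_c = N` with `dim W_i = dim M + i`. -/
def IsSatChain (F : Type) [Field F] [Fintype F] (d : ℕ)
    (M N : Submodule F (Fin d → F)) (c : ℕ)
    (W : Fin (c + 1) → Submodule F (Fin d → F)) : Prop :=
  W 0 = M ∧ W (Fin.last c) = N ∧
    (∀ i : Fin c, W i.castSucc < W i.succ) ∧
    ∀ i : Fin (c + 1), Module.finrank F (W i) = Module.finrank F M + (i : ℕ)

/-- `v` is the label of the saturated chain `W` with respect to the linear order `lo`: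
`v i` is the `lo`-least element of `W_{i+1} ∖ W_i`. -/
def IsLabelOf (F : Type) [Field F] [Fintype F] (d : ℕ) (lo : LinearOrder (Fin d → F)) (c : ℕ)
    (W : Fin (c + 1) → Submodule F (Fin d → F))
    (v : Fin c → (Fin d → F)) : Prop :=
  ∀ i : Fin c, v i ∈ W i.succ ∧ v i ∉ W i.castSucc ∧
    ∀ x : Fin d → F, x ∈ W i.succ → x ∉ W i.castSucc → lo.le (v i) x

/-- Strict lexicographic comparison of labels, with respect to the linear order `lo`. -/
def LexLt (F : Type) [Field F] [Fintype F] (d : ℕ) (lo : LinearOrder (Fin d → F)) (c : ℕ)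
    (v v' : Fin c → (Fin d → F)) : Prop :=
  ∃ i : Fin c, (∀ j : Fin c, j < i → v j = v' j) ∧ lo.lt (v i) (v' i)

/-!
Call a saturated chain from `M` to `N` greedy if each `v i` is the least vector of all of
`N ∖ W_i`, not merely of `W_{i+1} ∖ W_i`. A chain is greedy exactly when its label is increasing:
a vector of `N` outside `W_i` enters the chain at some later step `j ≥ i`, so it is at least
`v j ≥ v i`. Since `W_{i+1}` is spanned by `W_i` and `v i`, a chain is determined by its label, and
two chains whose labels agree before `i` have the same `W_i`; hence at the first difference the
label of the greedy chain is the smaller one.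
-/

open Module (finrank)

section Preorder

variable {α : Type*} [Preorder α] {c : ℕ} {a b z : α} {W : Fin (c + 1) → α}

/-- A saturated chain `a = W 0 ⋖ W 1 ⋖ ⋯ ⋖ W c = z` in an order. For subspaces of a
finite-dimensional space this is `IsSatChain`, with the dimension condition replaced by covering. -/
structure IsCoveringChain (a z : α) (W : Fin (c + 1) → α) : Prop where
  zero : W 0 = a
  last : W (Fin.last c) = z
  covBy (i : Fin c) : W i.castSucc ⋖ W i.succ

namespace IsCoveringChain

theorem monotone (hW : IsCoveringChain a z W) : Monotone W :=
  Fin.monotone_iff_le_succ.2 fun i => (hW.covBy i).le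

theorem le_last (hW : IsCoveringChain a z W) (k : Fin (c + 1)) : W k ≤ z :=
  hW.last ▸ hW.monotone k.le_last

theorem cons (hab : a ⋖ b) (hW : IsCoveringChain b z W) :
    IsCoveringChain a z (Fin.cons a W : Fin (c + 2) → α) where
  zero := rfl
  last := hW.last
  covBy := Fin.cases (by simpa [hW.zero] using hab) hW.covBy

end IsCoveringChain

end Preorder

section Module

variable {R V : Type*} [Semiring R] [AddCommMonoid V] [Module R V] {c : ℕ}
  {M N P Q : Submodule R V} {W W' : Fin (c + 1) → Submodule R V} {v v' : Fin c → V}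

theorem sup_span_singleton_eq_of_covBy {x : V} (h : P ⋖ Q) (hxQ : x ∈ Q) (hxP : x ∉ P) :
    P ⊔ Submodule.span R {x} = Q :=
  have hle : P ⊔ Submodule.span R {x} ≤ Q :=
    sup_le h.le ((Submodule.span_singleton_le_iff_mem x Q).2 hxQ)
  (h.eq_or_eq le_sup_left hle).resolve_left (Submodule.lt_sup_iff_notMem.2 hxP).ne'

theorem IsCoveringChain.apply_eq_of_forall_lt
    (hW : IsCoveringChain M N W) (hW' : IsCoveringChain M N W')
    (hv : ∀ i, v i ∈ (W i.succ : Set V) \ W i.castSucc)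
    (hv' : ∀ i, v' i ∈ (W' i.succ : Set V) \ W' i.castSucc) {k : Fin (c + 1)}
    (h : ∀ j : Fin c, j.castSucc < k → v j = v' j) : W k = W' k := by
  induction k using Fin.induction with
  | zero => rw [hW.zero, hW'.zero]
  | succ i ih =>
    have hWi : W i.castSucc = W' i.castSucc := ih fun j hj => h j (hj.trans i.castSucc_lt_succ)
    rw [← sup_span_singleton_eq_of_covBy (hW.covBy i) (hv i).1 (hv i).2,
      ← sup_span_singleton_eq_of_covBy (hW'.covBy i) (hv' i).1 (hv' i).2, hWi,
      h i i.castSucc_lt_succ]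

theorem IsCoveringChain.eq_of_label_eq
    (hW : IsCoveringChain M N W) (hW' : IsCoveringChain M N W')
    (hv : ∀ i, v i ∈ (W i.succ : Set V) \ W i.castSucc)
    (hv' : ∀ i, v i ∈ (W' i.succ : Set V) \ W' i.castSucc) : W = W' :=
  funext fun _ => hW.apply_eq_of_forall_lt hW' hv hv' fun _ _ => rfl

end Module

section Label

variable {R V : Type*} [Semiring R] [AddCommMonoid V] [Module R V] [LinearOrder V] {c : ℕ}
  {M N : Submodule R V} {W W₀ : Fin (c + 1) → Submodule R V} {v v₀ : Fin c → V}

/-- `v` is the label of the chain `W`: this is `IsLabelOf` for modules over a semiring, with the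
linear order taken from the instance on `V`. -/
def IsLeastLabel (W : Fin (c + 1) → Submodule R V) (v : Fin c → V) : Prop :=
  ∀ i, IsLeast ((W i.succ : Set V) \ W i.castSucc) (v i)

/-- `v` is the sequence of greedy choices along a chain `W` towards `N`: each `v i` is least among
all vectors of `N` outside `W_i`. -/
def IsGreedyLabel (N : Submodule R V) (W : Fin (c + 1) → Submodule R V) (v : Fin c → V) : Prop :=
  ∀ i, IsLeast ((N : Set V) \ W i.castSucc) (v i)

theorem IsGreedyLabel.strictMono (hW : IsCoveringChain M N W) (hv : IsLeastLabel W v)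
    (hgreedy : IsGreedyLabel N W v) : StrictMono v := by
  intro i j hij
  have hvj : v j ∉ W i.castSucc := fun h => (hv j).1.2 (hW.monotone hij.le h)
  have hvi : v i ∈ W j.castSucc := hW.monotone (Fin.succ_le_castSucc_iff.2 hij) (hv i).1.1
  exact lt_of_le_of_ne ((hgreedy i).2 ⟨(hgreedy j).1.1, hvj⟩) fun h => (hv j).1.2 (h ▸ hvi)

theorem IsLeastLabel.isGreedyLabel (hW : IsCoveringChain M N W) (hv : IsLeastLabel W v)
    (hmono : Monotone v) : IsGreedyLabel N W v := by
  intro i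
  have hle (k : Fin (c + 1)) (x : V) (hxk : x ∈ W k) (hxi : x ∉ W i.castSucc) : v i ≤ x := by
    induction k using Fin.induction with
    | zero => exact absurd (hW.monotone (Fin.zero_le _) hxk) hxi
    | succ j ih =>
      by_cases hxj : x ∈ W j.castSucc
      · exact ih hxj
      have hij : i ≤ j := by
        by_contra! hji
        exact hxi (hW.monotone (Fin.succ_le_castSucc_iff.2 hji) hxk)
      exact (hmono hij).trans ((hv j).2 ⟨hxk, hxj⟩)
  exact ⟨⟨hW.le_last _ (hv i).1.1, (hv i).1.2⟩,
    fun x hx => hle (Fin.last c) x (hW.last ▸ hx.1) hx.2⟩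

theorem IsGreedyLabel.toLex_le (hW₀ : IsCoveringChain M N W₀) (hv₀ : IsLeastLabel W₀ v₀)
    (hgreedy : IsGreedyLabel N W₀ v₀) (hW : IsCoveringChain M N W) (hv : IsLeastLabel W v) :
    toLex v₀ ≤ toLex v := by
  refine le_of_not_gt ?_
  rintro ⟨i, hagree, hlt⟩
  have hWi : W i.castSucc = W₀ i.castSucc :=
    hW.apply_eq_of_forall_lt hW₀ (fun j => (hv j).1) (fun j => (hv₀ j).1) fun j hj => hagree j hj
  have hvi : v i ∈ (N : Set V) \ W₀ i.castSucc := ⟨hW.le_last _ (hv i).1.1, hWi ▸ (hv i).1.2⟩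
  exact hlt.not_ge ((hgreedy i).2 hvi)

end Label

section Dimension

variable {K V : Type*} [DivisionRing K] [AddCommGroup V] [Module K V] [FiniteDimensional K V]
  {c : ℕ} {M N P Q : Submodule K V} {W : Fin (c + 1) → Submodule K V}

theorem finrank_eq_add_one_of_covBy (h : P ⋖ Q) : finrank K Q = finrank K P + 1 := by
  obtain ⟨x, hxQ, hxP⟩ := SetLike.exists_of_lt h.lt
  rw [← sup_span_singleton_eq_of_covBy h hxQ hxP, Submodule.finrank_sup_span_singleton hxP]

theorem covBy_of_lt_of_finrank_eq_add_one (hlt : P < Q)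
    (h : finrank K Q = finrank K P + 1) : P ⋖ Q := by
  refine ⟨hlt, fun S hPS hSQ => ?_⟩
  have := Submodule.finrank_lt_finrank_of_lt hPS
  have := Submodule.finrank_lt_finrank_of_lt hSQ
  omega

theorem IsCoveringChain.finrank_eq (hW : IsCoveringChain M N W) (k : Fin (c + 1)) :
    finrank K (W k) = finrank K M + k := by
  induction k using Fin.induction with
  | zero => rw [hW.zero, Fin.val_zero, add_zero]
  | succ i ih =>
    rw [finrank_eq_add_one_of_covBy (hW.covBy i), ih, Fin.val_castSucc, Fin.val_succ,
      add_assoc]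

theorem exists_isGreedyLabel [LinearOrder V] [WellFoundedLT V] (hMN : M ≤ N)
    (hc : finrank K M + c = finrank K N) :
    ∃ (W : Fin (c + 1) → Submodule K V) (v : Fin c → V),
      IsCoveringChain M N W ∧ IsLeastLabel W v ∧ IsGreedyLabel N W v := by
  induction c generalizing M with
  | zero =>
    have hMN_eq : M = N := Submodule.eq_of_le_of_finrank_eq hMN hc
    exact ⟨fun _ => M, Fin.elim0, ⟨rfl, hMN_eq, fun i => i.elim0⟩, fun i => i.elim0,
      fun i => i.elim0⟩
  | succ c ih =>
    have hlt : M < N := hMN.lt_of_ne fun h => by subst h; omega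
    obtain ⟨x, ⟨hxN, hxM⟩, hxmin⟩ : ∃ x, IsLeast ((N : Set V) \ M) x :=
      have hne := Set.sdiff_nonempty.2 hlt.not_ge
      ⟨_, wellFounded_lt.min_mem _ hne, fun _ => wellFounded_lt.min_le⟩
    let P := M ⊔ Submodule.span K {x}
    have hMP : M ⋖ P := by
      simpa only [P, sup_comm] using Submodule.covBy_span_singleton_sup hxM
    have hPN : P ≤ N := sup_le hMN ((Submodule.span_singleton_le_iff_mem x N).2 hxN)
    have hxP : x ∈ P := Submodule.mem_sup_right (Submodule.mem_span_singleton_self x)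
    obtain ⟨W, v, hW, hv, hgreedy⟩ := ih hPN (by rw [finrank_eq_add_one_of_covBy hMP]; omega)
    have hxW : x ∈ W 0 := hW.zero ▸ hxP
    refine ⟨Fin.cons M W, Fin.cons x v, hW.cons hMP, Fin.cases ?_ hv, Fin.cases ?_ hgreedy⟩
    · exact ⟨⟨hxW, hxM⟩, fun y hy => hxmin ⟨hW.le_last 0 hy.1, hy.2⟩⟩
    · exact ⟨⟨hxN, hxM⟩, hxmin⟩

theorem stmt_3_general [LinearOrder V] [WellFoundedLT V] (hMN : M ≤ N)
    (hc : finrank K M + c = finrank K N) :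
    ∃ (W₀ : Fin (c + 1) → Submodule K V) (v₀ : Fin c → V),
      IsCoveringChain M N W₀ ∧ IsLeastLabel W₀ v₀ ∧ StrictMono v₀ ∧
      (∀ W, IsCoveringChain M N W → (∃ v, IsLeastLabel W v ∧ StrictMono v) → W = W₀) ∧
      ∀ W v, IsCoveringChain M N W → IsLeastLabel W v → W ≠ W₀ → toLex v₀ < toLex v := by
  obtain ⟨W₀, v₀, hW₀, hv₀, hgreedy₀⟩ := exists_isGreedyLabel hMN hc
  have eq_of_label_eq {W : Fin (c + 1) → Submodule K V} {v : Fin c → V}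
      (hW : IsCoveringChain M N W) (hv : IsLeastLabel W v) (h : toLex v₀ = toLex v) : W = W₀ :=
    hW.eq_of_label_eq hW₀ (fun i => (hv i).1) fun i => toLex.injective h ▸ (hv₀ i).1
  refine ⟨W₀, v₀, hW₀, hv₀, hgreedy₀.strictMono hW₀ hv₀, ?_, ?_⟩
  · rintro W hW ⟨v, hv, hmono⟩
    have hgreedy := hv.isGreedyLabel hW hmono.monotone
    exact eq_of_label_eq hW hv
      ((hgreedy₀.toLex_le hW₀ hv₀ hW hv).antisymm (hgreedy.toLex_le hW hv hW₀ hv₀))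
  · intro W v hW hv hne
    exact (hgreedy₀.toLex_le hW₀ hv₀ hW hv).lt_of_ne fun h => hne (eq_of_label_eq hW hv h)

end Dimension

theorem isSatChain_iff_isCoveringChain {F : Type} [Field F] [Fintype F] {d c : ℕ}
    {M N : Submodule F (Fin d → F)} {W : Fin (c + 1) → Submodule F (Fin d → F)} :
    IsSatChain F d M N c W ↔ IsCoveringChain M N W := by
  refine ⟨fun ⟨hzero, hlast, hlt, hrank⟩ => ⟨hzero, hlast, fun i => ?_⟩,
    fun hW => ⟨hW.zero, hW.last, fun i => (hW.covBy i).lt, hW.finrank_eq⟩⟩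
  refine covBy_of_lt_of_finrank_eq_add_one (hlt i) ?_
  rw [hrank, hrank, Fin.val_succ, Fin.val_castSucc, add_assoc]

theorem isLabelOf_iff_isLeastLabel {F : Type} [Field F] [Fintype F] {d c : ℕ}
    [lo : LinearOrder (Fin d → F)] {W : Fin (c + 1) → Submodule F (Fin d → F)}
    {v : Fin c → Fin d → F} : IsLabelOf F d lo c W v ↔ IsLeastLabel W v :=
  forall_congr' fun _ =>
    ⟨fun ⟨hmem, hnotMem, hle⟩ => ⟨⟨hmem, hnotMem⟩, fun x hx => hle x hx.1 hx.2⟩,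
      fun ⟨hmem, hle⟩ => ⟨hmem.1, hmem.2, fun _ hx hx' => hle ⟨hx, hx'⟩⟩⟩

/-- For subspaces `M ⊆ N` of `F^d` and `c = dim N - dim M`, there is exactly
one saturated chain from `M` to `N` whose label is strictly increasing, and every other
saturated chain from `M` to `N` has a lexicographically strictly greater label. -/
theorem stmt_3 (F : Type) [Field F] [Fintype F] (d : ℕ) (hd : 1 ≤ d)
    (lo : LinearOrder (Fin d → F))
    (M N : Submodule F (Fin d → F)) (hMN : M ≤ N)
    (c : ℕ) (hc : c = Module.finrank F N - Module.finrank F M) :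
    ∃ (W₀ : Fin (c + 1) → Submodule F (Fin d → F)) (v₀ : Fin c → (Fin d → F)),
      IsSatChain F d M N c W₀ ∧ IsLabelOf F d lo c W₀ v₀ ∧
      (∀ i j : Fin c, i < j → lo.lt (v₀ i) (v₀ j)) ∧
      (∀ W : Fin (c + 1) → Submodule F (Fin d → F), IsSatChain F d M N c W →
        (∃ v : Fin c → (Fin d → F), IsLabelOf F d lo c W v ∧
          ∀ i j : Fin c, i < j → lo.lt (v i) (v j)) → W = W₀) ∧
      (∀ (W : Fin (c + 1) → Submodule F (Fin d → F)) (v : Fin c → (Fin d → F)),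
        IsSatChain F d M N c W → IsLabelOf F d lo c W v → W ≠ W₀ →
        LexLt F d lo c v₀ v) := by
  have hrank : Module.finrank F M + c = Module.finrank F N :=
    hc ▸ Nat.add_sub_cancel' (Submodule.finrank_mono hMN)
  simp only [isSatChain_iff_isCoveringChain, isLabelOf_iff_isLeastLabel]
  exact stmt_3_general hMN hrank
end

section
/- Let F be a finite field and d ≥ 1 an integer. Consider the poset of all F-linear subspaces of F^d ordered by inclusion; it is pure, its maximal chains being the complete flags 0 = V₀ ⊊ V₁ ⊊ ⋯ ⊊ V_d = F^d with dim(V_i) = i. Then this poset is shellable: its maximal chains (regarded as sets of subspaces) admit an enumeration m₁, m₂, …, m_t such that for all 1 ≤ i < j ≤ t there exist 1 ≤ k < j and x ∈ m_j with m_i ∩ m_j ⊆ m_k ∩ m_j = m_j ∖ {x}. -/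
open scoped Classical

/-!
A finite upper semimodular lattice is lexicographically shellable (Björner). Number the elements by
a linear extension `e` and label a covering pair `x ⋖ y` by the least number of an element below `y`
but not below `x`. An element `z` with the least number satisfies `y = x ⊔ z`, so a maximal chain is
determined by its sequence of labels; order the maximal chains lexicographically by these sequences.

If a maximal chain `s` precedes `t`, then at the place where they part the first label of `s`
belongs to some `z`, and the labels of `t` must drop to at most `e z` by the time `t` swallows `z`.
So `t` has a descent at some `x ⋖ y ⋖ w` with `z ≰ y`, whence `y ∉ s`. The element realizing the
label of `y ⋖ w` has only elements of `Set.Iic x` strictly below it, so by semimodularity its join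
`y'` with `x` satisfies `x ⋖ y' ⋖ w`, and exchanging `y` for `y'` gives an earlier maximal chain.
-/

variable {α : Type*}

/-- The maximal chains of `α` can be enumerated in a shelling order. Purity, which is usually a part
of the notion of a shellable poset, is not included. -/
def HasShelling (α : Type*) [PartialOrder α] : Prop :=
  ∃ (t : ℕ) (m : Fin t → Finset α),
    (∀ j : Fin t, IsMaxChain (· ≤ ·) (m j : Set α)) ∧
    (∀ c : Finset α, IsMaxChain (· ≤ ·) (c : Set α) → ∃! j : Fin t, m j = c) ∧
    ∀ i j : Fin t, i < j → ∃ k : Fin t, k < j ∧ ∃ x ∈ m j,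
      m i ∩ m j ⊆ m k ∩ m j ∧ m k ∩ m j = (m j).erase x

theorem exists_equiv_fin_lt_iff {β L : Type*} [Finite β] [LinearOrder L] {key : β → L}
    (key_injective : key.Injective) :
    ∃ (t : ℕ) (m : Fin t ≃ β), ∀ i j, i < j ↔ key (m i) < key (m j) := by
  let _ := Fintype.ofFinite β
  let _ : LinearOrder β := LinearOrder.lift' key key_injective
  exact ⟨_, (Fintype.orderIsoFinOfCardEq β rfl).toEquiv,
    fun _ _ => (Fintype.orderIsoFinOfCardEq β rfl).lt_iff_lt.symm⟩

theorem exists_injective_strictMono_nat (α : Type*) [PartialOrder α] [Finite α] :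
    ∃ e : α → ℕ, e.Injective ∧ StrictMono e := by
  have : Finite (LinearExtension α) := ‹Finite α›
  let _ := Fintype.ofFinite (LinearExtension α)
  let rank := (Fintype.orderIsoFinOfCardEq (LinearExtension α) rfl).symm
  have rank_injective : (fun x : α => (rank x : ℕ)).Injective :=
    Fin.val_injective.comp rank.injective
  refine ⟨_, rank_injective, Monotone.strictMono_of_injective ?_ rank_injective⟩
  exact fun x y hxy => rank.monotone (toLinearExtension.monotone hxy)

theorem hasShelling_of_injective [PartialOrder α] [Finite α] {L : Type*} [LinearOrder L]
    {key : Flag α → L} (key_injective : key.Injective)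
    (exists_exchange : ∀ s t : Flag α, key s < key t → ∃ r : Flag α, key r < key t ∧
      ∃ x ∈ t, x ∉ s ∧ (r ∩ t : Set α) = (t : Set α) \ {x}) :
    HasShelling α := by
  let _ := Fintype.ofFinite α
  have : Finite (Flag α) := Finite.of_injective _ SetLike.coe_injective
  obtain ⟨t, m, lt_iff⟩ := exists_equiv_fin_lt_iff key_injective
  refine ⟨t, fun j => (m j : Set α).toFinset, fun j => ?_, fun c hc => ?_, fun i j hij => ?_⟩
  · simpa only [Set.coe_toFinset] using (m j).maxChain
  · refine ⟨m.symm (Flag.ofIsMaxChain c hc), ?_, fun j hj => ?_⟩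
    · exact Finset.coe_injective (by simp)
    · rw [Equiv.eq_symm_apply]
      exact Flag.ext (by simp [← hj])
  · obtain ⟨r, hr, x, hxj, hxi, hrj⟩ := exists_exchange _ _ ((lt_iff i j).1 hij)
    obtain ⟨k, rfl⟩ := m.surjective r
    have inter_eq : (m k : Set α).toFinset ∩ (m j : Set α).toFinset =
        (m j : Set α).toFinset.erase x := by
      simpa [← Finset.coe_inj] using hrj
    refine ⟨k, (lt_iff k j).2 hr, x, by simpa using hxj, ?_, inter_eq⟩
    rw [inter_eq, Finset.subset_erase]
    exact ⟨Finset.inter_subset_right, by simp [hxi]⟩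

section EdgeLabel

/-- The label of a pair `x`, `y` (meant for `x ⋖ y`) for the numbering `e`: the least number of an
element below `y` but not below `x`. It is `0` if there is no such element. -/
noncomputable def edgeLabel [LE α] (e : α → ℕ) (x y : α) : ℕ :=
  sInf (e '' {z | z ≤ y ∧ ¬ z ≤ x})

variable {e : α → ℕ} {w x y z : α}

theorem edgeLabel_le [LE α] (hzy : z ≤ y) (hzx : ¬ z ≤ x) : edgeLabel e x y ≤ e z :=
  Nat.sInf_le ⟨z, ⟨hzy, hzx⟩, rfl⟩

theorem exists_edgeLabel_eq [Preorder α] (e : α → ℕ) (hyx : ¬ y ≤ x) :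
    ∃ z ≤ y, ¬ z ≤ x ∧ e z = edgeLabel e x y := by
  obtain ⟨z, ⟨hzy, hzx⟩, hz⟩ := Nat.sInf_mem
    (⟨e y, y, ⟨le_rfl, hyx⟩, rfl⟩ : (e '' {z | z ≤ y ∧ ¬ z ≤ x}).Nonempty)
  exact ⟨z, hzy, hzx, hz⟩

theorem edgeLabel_of_le [Preorder α] (hyx : y ≤ x) : edgeLabel e x y = 0 := by
  have : {z | z ≤ y ∧ ¬ z ≤ x} = ∅ :=
    Set.eq_empty_of_forall_notMem fun z hz => hz.2 (hz.1.trans hyx)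
  rw [edgeLabel, this, Set.image_empty, Nat.sInf_empty]

theorem sup_eq_of_covBy_of_not_le [SemilatticeSup α] (hxy : x ⋖ y) (hzy : z ≤ y)
    (hzx : ¬ z ≤ x) : x ⊔ z = y :=
  (hxy.eq_or_eq le_sup_left (sup_le hxy.le hzy)).resolve_left fun h => hzx (sup_eq_left.1 h)

theorem eq_of_edgeLabel_eq [SemilatticeSup α] (he : e.Injective) (hxy : x ⋖ y) (hxw : x ⋖ w)
    (h : edgeLabel e x y = edgeLabel e x w) : y = w := by
  obtain ⟨z, hzy, hzx, hz⟩ := exists_edgeLabel_eq e hxy.lt.not_ge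
  obtain ⟨z', hzw, hzx', hz'⟩ := exists_edgeLabel_eq e hxw.lt.not_ge
  obtain rfl : z = z' := he (by rw [hz, hz', h])
  rw [← sup_eq_of_covBy_of_not_le hxy hzy hzx, sup_eq_of_covBy_of_not_le hxw hzw hzx]

theorem covBy_sup_of_forall_lt_le [Lattice α] [IsUpperModularLattice α] (hzx : ¬ z ≤ x)
    (h : ∀ c < z, c ≤ x) : x ⋖ x ⊔ z := by
  refine covBy_sup_of_inf_covBy_right (covBy_of_eq_or_eq (inf_lt_right.2 hzx) fun c hc hcz => ?_)
  exact hcz.eq_or_lt.symm.imp_left fun hlt => (le_inf (h c hlt) hcz).antisymm hc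

theorem covBy_of_covBy_of_covBy_of_ne [Lattice α] [IsWeakUpperModularLattice α] {y' : α}
    (hxy : x ⋖ y) (hyw : y ⋖ w) (hxy' : x ⋖ y') (hyw' : y' ≤ w) (hne : y' ≠ y) : y' ⋖ w := by
  have inf_eq : y' ⊓ y = x := hxy'.wcovBy.inf_eq hxy.wcovBy hne
  have not_le : ¬ y' ≤ y := fun h => hne ((hxy.eq_or_eq hxy'.le h).resolve_left hxy'.ne')
  have sup_eq : y' ⊔ y = w := by rw [sup_comm, sup_eq_of_covBy_of_not_le hyw hyw' not_le]
  rw [← sup_eq]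
  exact covBy_sup_of_inf_covBy_of_inf_covBy_left (inf_eq ▸ hxy') (inf_eq ▸ hxy)

theorem exists_edgeLabel_lt_of_descent [Lattice α] [IsUpperModularLattice α] (he : StrictMono e)
    (hxy : x ⋖ y) (hyw : y ⋖ w) (h : edgeLabel e y w < edgeLabel e x y) :
    ∃ y', x ⋖ y' ∧ y' ⋖ w ∧ y' ≠ y ∧ edgeLabel e x y' < edgeLabel e x y := by
  obtain ⟨z, hzw, hzy, hz⟩ := exists_edgeLabel_eq e hyw.lt.not_ge
  have hzx : ¬ z ≤ x := fun hle => hzy (hle.trans hxy.le)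
  have lt_le_y : ∀ c < z, c ≤ y := fun c hc => by
    by_contra hcy
    exact (he hc).not_ge (hz ▸ edgeLabel_le (hc.le.trans hzw) hcy)
  have lt_le_x : ∀ c < z, c ≤ x := fun c hc => by
    by_contra hcx
    exact ((he hc).trans (hz ▸ h)).not_ge (edgeLabel_le (lt_le_y c hc) hcx)
  have hne : x ⊔ z ≠ y := fun heq => hzy (heq ▸ le_sup_right)
  have hcov : x ⋖ x ⊔ z := covBy_sup_of_forall_lt_le hzx lt_le_x
  have hle : x ⊔ z ≤ w := sup_le (hxy.le.trans hyw.le) hzw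
  exact ⟨x ⊔ z, hcov, covBy_of_covBy_of_covBy_of_ne hxy hyw hcov hle hne, hne,
    (edgeLabel_le le_sup_right hzx).trans_lt (hz ▸ h)⟩

end EdgeLabel

section SaturatedSeq

/-- `f` runs through a saturated chain from `⊥` to `⊤` and stays at `⊤` once it is reached. This
encodes maximal chains without reference to their length. -/
structure IsSaturatedSeq [PartialOrder α] [BoundedOrder α] (f : ℕ → α) : Prop where
  zero : f 0 = ⊥
  covBy {i : ℕ} : f i ≠ ⊤ → f i ⋖ f (i + 1)
  succ_eq_top {i : ℕ} : f i = ⊤ → f (i + 1) = ⊤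

namespace IsSaturatedSeq

variable [PartialOrder α] [BoundedOrder α] {f g : ℕ → α} {i j : ℕ}

theorem wcovBy (hf : IsSaturatedSeq f) (i : ℕ) : f i ⩿ f (i + 1) := by
  by_cases h : f i = ⊤
  · rw [h, hf.succ_eq_top h]
    exact WCovBy.rfl
  · exact (hf.covBy h).wcovBy

theorem monotone (hf : IsSaturatedSeq f) : Monotone f :=
  monotone_nat_of_le_succ fun i => (hf.wcovBy i).le

theorem lt_of_lt (hf : IsSaturatedSeq f) (hi : f i ≠ ⊤) (hij : i < j) : f i < f j :=
  (hf.covBy hi).lt.trans_le (hf.monotone hij)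

theorem eq_of_apply_eq (hf : IsSaturatedSeq f) (hi : f i ≠ ⊤) (h : f i = f j) : i = j := by
  rcases lt_trichotomy i j with hij | hij | hij
  · exact absurd h (hf.lt_of_lt hi hij).ne
  · exact hij
  · exact absurd h (hf.lt_of_lt (h ▸ hi) hij).ne'

theorem succ_le_of_lt (hf : IsSaturatedSeq f) (h : f i < f j) : f (i + 1) ≤ f j :=
  hf.monotone (hf.monotone.reflect_lt h)

theorem exists_eq_top [WellFoundedGT α] (hf : IsSaturatedSeq f) : ∃ n, f n = ⊤ := by
  obtain ⟨n, hn⟩ := WellFoundedGT.monotone_chain_condition ⟨f, hf.monotone⟩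
  by_contra! h
  exact (hf.covBy (h n)).ne (hn (n + 1) n.le_succ)

theorem mem_range_of_forall_le_or_le [WellFoundedGT α] (hf : IsSaturatedSeq f) {x : α}
    (h : ∀ i, f i ≤ x ∨ x ≤ f i) : x ∈ Set.range f := by
  obtain ⟨n, hn⟩ := hf.exists_eq_top
  have exists_ge : ∃ i, x ≤ f i := ⟨n, hn ▸ le_top⟩
  obtain ⟨i, hi, hmin⟩ : ∃ i, x ≤ f i ∧ ∀ j < i, ¬ x ≤ f j :=
    ⟨Nat.find exists_ge, Nat.find_spec exists_ge, fun _ => Nat.find_min exists_ge⟩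
  cases i with
  | zero => exact ⟨0, le_bot_iff.1 (hf.zero ▸ hi) ▸ hf.zero⟩
  | succ i =>
    have not_le : ¬ x ≤ f i := hmin i i.lt_succ_self
    rcases (hf.wcovBy i).eq_or_eq ((h i).resolve_right not_le) hi with heq | heq
    · exact absurd heq.le not_le
    · exact ⟨i + 1, heq.symm⟩

theorem isMaxChain_range [WellFoundedGT α] (hf : IsSaturatedSeq f) :
    IsMaxChain (· ≤ ·) (Set.range f) := by
  refine ⟨hf.monotone.isChain_range, fun c hc hle => hle.antisymm fun x hx => ?_⟩
  exact hf.mem_range_of_forall_le_or_le fun i => hc.total (hle ⟨i, rfl⟩) hx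

theorem succ_le_succ (hf : IsSaturatedSeq f) (hg : IsSaturatedSeq g)
    (hrange : Set.range g ⊆ Set.range f) (h : f i = g i) : f (i + 1) ≤ g (i + 1) := by
  by_cases htop : g i = ⊤
  · exact hg.succ_eq_top htop ▸ le_top
  · obtain ⟨k, hk⟩ := hrange ⟨i + 1, rfl⟩
    rw [← hk]
    exact hf.succ_le_of_lt (h ▸ hk ▸ (hg.covBy htop).lt)

theorem eq_of_range_eq (hf : IsSaturatedSeq f) (hg : IsSaturatedSeq g)
    (hrange : Set.range f = Set.range g) : f = g := by
  funext i
  induction i with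
  | zero => rw [hf.zero, hg.zero]
  | succ i ih =>
    exact (hf.succ_le_succ hg hrange.ge ih).antisymm (hg.succ_le_succ hf hrange.le ih.symm)

theorem update (hf : IsSaturatedSeq f) {x : α} (hlt : f i ⋖ x) (hgt : x ⋖ f (i + 2)) :
    IsSaturatedSeq (Function.update f (i + 1) x) where
  zero := by rw [Function.update_of_ne (Nat.succ_ne_zero i).symm, hf.zero]
  covBy {j} hj := by
    rcases eq_or_ne j (i + 1) with rfl | hj₁
    · simpa using hgt
    rcases eq_or_ne j i with rfl | hj₀
    · simpa using hlt
    · rw [Function.update_of_ne hj₁] at hj ⊢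
      rw [Function.update_of_ne (by lia)]
      exact hf.covBy hj
  succ_eq_top {j} hj := by
    rcases eq_or_ne j (i + 1) with rfl | hj₁
    · exact absurd (by simpa using hj) hgt.lt.ne_top
    rcases eq_or_ne j i with rfl | hj₀
    · exact absurd (by simpa using hj) hlt.lt.ne_top
    · rw [Function.update_of_ne hj₁] at hj
      rw [Function.update_of_ne (by lia)]
      exact hf.succ_eq_top hj

theorem range_update_inter_range (hf : IsSaturatedSeq f) {x : α} (htop : f i ≠ ⊤)
    (hne : x ≠ f i) :
    Set.range (Function.update f i x) ∩ Set.range f = Set.range f \ {f i} := by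
  ext y
  refine and_comm.trans (and_congr_right ?_)
  rintro ⟨j, rfl⟩
  constructor
  · rintro ⟨k, hk⟩ heq
    rcases eq_or_ne k i with rfl | hki
    · exact hne (by rw [← heq, ← hk, Function.update_self])
    · rw [Function.update_of_ne hki] at hk
      exact hki (hf.eq_of_apply_eq htop (hk.trans heq).symm).symm
  · exact fun hj => ⟨j, Function.update_of_ne (fun h => hj (congrArg f h)) _ _⟩

end IsSaturatedSeq

theorem exists_isSaturatedSeq_range_eq [PartialOrder α] [BoundedOrder α]
    [WellFoundedLT α] [WellFoundedGT α] (s : Flag α) :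
    ∃ f : ℕ → α, IsSaturatedSeq f ∧ Set.range f = s := by
  let _ : SuccOrder s := SuccOrder.ofLinearWellFoundedLT s
  let seq : ℕ → s := fun i => Order.succ^[i] ⊥
  have seq_succ (i : ℕ) : seq (i + 1) = Order.succ (seq i) := Function.iterate_succ_apply' _ _ _
  have seq_saturated : IsSaturatedSeq fun i => (seq i : α) :=
    { zero := rfl
      covBy := fun {i} hi => by
        rw [Flag.coe_covBy_coe, seq_succ]
        exact Order.covBy_succ_of_not_isMax fun h => hi (isMax_iff_eq_top.1 (Flag.isMax_coe.2 h))
      succ_eq_top := fun {i} hi => by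
        have : seq i = ⊤ := Subtype.ext hi
        rw [seq_succ, this, Order.succ_top]
        rfl }
  exact ⟨_, seq_saturated, seq_saturated.isMaxChain_range.2 s.chain_le
    (Set.range_subset_iff.2 fun i => (seq i).2)⟩

end SaturatedSeq

section LabelSeq

/-- The sequence of edge labels along `f`, as an element of the lexicographic order. -/
noncomputable def labelSeq [LE α] (e : α → ℕ) (f : ℕ → α) : Lex (ℕ → ℕ) :=
  toLex fun i => edgeLabel e (f i) (f (i + 1))

variable {e : α → ℕ} {f g : ℕ → α} {n : ℕ}

theorem IsSaturatedSeq.apply_eq_of_edgeLabel_eq [SemilatticeSup α] [BoundedOrder α]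
    (he : e.Injective) (hf : IsSaturatedSeq f) (hg : IsSaturatedSeq g)
    (h : ∀ i < n, edgeLabel e (f i) (f (i + 1)) = edgeLabel e (g i) (g (i + 1))) :
    f n = g n := by
  induction n with
  | zero => rw [hf.zero, hg.zero]
  | succ n ih =>
    have heq : f n = g n := ih fun i hi => h i (hi.trans n.lt_succ_self)
    by_cases htop : f n = ⊤
    · rw [hf.succ_eq_top htop, hg.succ_eq_top (heq ▸ htop)]
    · have hcov : f n ⋖ g (n + 1) := heq ▸ hg.covBy (heq ▸ htop)
      exact eq_of_edgeLabel_eq he (hf.covBy htop) hcov (heq ▸ h n n.lt_succ_self)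

theorem IsSaturatedSeq.eq_of_labelSeq_eq [SemilatticeSup α] [BoundedOrder α]
    (he : e.Injective) (hf : IsSaturatedSeq f) (hg : IsSaturatedSeq g)
    (h : labelSeq e f = labelSeq e g) : f = g :=
  funext fun _ => hf.apply_eq_of_edgeLabel_eq he hg fun i _ => congrFun h i

theorem IsSaturatedSeq.exists_descent [PartialOrder α] [BoundedOrder α] [WellFoundedGT α]
    (hf : IsSaturatedSeq f) (hg : IsSaturatedSeq g) (hn : f n = g n)
    (h : edgeLabel e (f n) (f (n + 1)) < edgeLabel e (g n) (g (n + 1))) :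
    ∃ p, g (p + 1) ∉ Set.range f ∧
      edgeLabel e (g (p + 1)) (g (p + 2)) < edgeLabel e (g p) (g (p + 1)) := by
  have hgn : g n ≠ ⊤ := fun htop => by
    rw [edgeLabel_of_le (htop ▸ le_top : g (n + 1) ≤ g n)] at h
    exact h.not_ge (Nat.zero_le _)
  obtain ⟨z, hzf, hzn, hz⟩ := exists_edgeLabel_eq e (hf.covBy (hn ▸ hgn)).lt.not_ge
  have notMem_range {r : ℕ} (hr : n ≤ r) (hzr : ¬ z ≤ g (r + 1)) : g (r + 1) ∉ Set.range f := by
    rintro ⟨k, hk⟩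
    have hlt : f n < f k := hn ▸ hk ▸ hg.lt_of_lt hgn (Nat.lt_succ_of_le hr)
    exact hzr (hk ▸ hzf.trans (hf.succ_le_of_lt hlt))
  by_contra! no_descent
  have not_le_and_le {r : ℕ} (hr : n ≤ r) : ¬ z ≤ g r ∧
      edgeLabel e (g n) (g (n + 1)) ≤ edgeLabel e (g r) (g (r + 1)) := by
    induction r, hr using Nat.le_induction with
    | base => exact ⟨hn ▸ hzn, le_rfl⟩
    | succ r hr ih =>
      have hzr : ¬ z ≤ g (r + 1) := fun hle =>
        (hz ▸ h).not_ge (ih.2.trans (edgeLabel_le hle ih.1))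
      exact ⟨hzr, ih.2.trans (no_descent r (notMem_range hr hzr))⟩
  obtain ⟨m, hm⟩ := hg.exists_eq_top
  exact (not_le_and_le (le_max_left n m)).1
    (le_top.trans (hm ▸ hg.monotone (le_max_right n m)))

theorem IsSaturatedSeq.exists_labelSeq_lt_of_descent [Lattice α] [IsUpperModularLattice α]
    [BoundedOrder α] (he : StrictMono e) (hg : IsSaturatedSeq g) {p : ℕ} (hp : g (p + 1) ≠ ⊤)
    (h : edgeLabel e (g (p + 1)) (g (p + 2)) < edgeLabel e (g p) (g (p + 1))) :
    ∃ f, IsSaturatedSeq f ∧ labelSeq e f < labelSeq e g ∧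
      Set.range f ∩ Set.range g = Set.range g \ {g (p + 1)} := by
  obtain ⟨y, hpy, hyp, hne, hlt⟩ :=
    exists_edgeLabel_lt_of_descent he (hg.covBy fun htop => hp (hg.succ_eq_top htop))
      (hg.covBy hp) h
  refine ⟨_, hg.update hpy hyp, ⟨p, fun i hi => ?_, ?_⟩, hg.range_update_inter_range hp hne⟩
  · change edgeLabel e _ _ = edgeLabel e _ _
    rw [Function.update_of_ne (by lia), Function.update_of_ne (by lia)]
  · change edgeLabel e _ _ < edgeLabel e _ _
    rwa [Function.update_of_ne (by lia), Function.update_self]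

end LabelSeq

theorem stmt_4_general (α : Type*) [Lattice α] [BoundedOrder α] [IsUpperModularLattice α]
    [Finite α] : HasShelling α := by
  obtain ⟨e, e_injective, e_strictMono⟩ := exists_injective_strictMono_nat α
  choose seq seq_saturated range_seq using exists_isSaturatedSeq_range_eq (α := α)
  have key_injective : (fun s => labelSeq e (seq s)).Injective := fun s t hst => Flag.ext <| by
    rw [← range_seq s, ← range_seq t,
      (seq_saturated s).eq_of_labelSeq_eq e_injective (seq_saturated t) hst]
  refine hasShelling_of_injective key_injective fun s t hst => ?_
  obtain ⟨n, labels_eq, label_lt⟩ := hst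
  have apply_eq : seq s n = seq t n :=
    (seq_saturated s).apply_eq_of_edgeLabel_eq e_injective (seq_saturated t) labels_eq
  obtain ⟨p, notMem_s, descent⟩ :=
    (seq_saturated s).exists_descent (seq_saturated t) apply_eq label_lt
  rw [range_seq] at notMem_s
  obtain ⟨f, f_saturated, labelSeq_lt, range_inter⟩ :=
    (seq_saturated t).exists_labelSeq_lt_of_descent e_strictMono
      (fun htop => notMem_s (htop ▸ s.top_mem)) descent
  obtain ⟨r, rfl⟩ : ∃ r, seq r = f :=
    ⟨Flag.ofIsMaxChain _ f_saturated.isMaxChain_range,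
      (seq_saturated _).eq_of_range_eq f_saturated (range_seq _)⟩
  rw [range_seq, range_seq] at range_inter
  have mem_t : seq t (p + 1) ∈ t := (range_seq t).le (Set.mem_range_self _)
  exact ⟨r, labelSeq_lt, _, mem_t, notMem_s, range_inter⟩

/-- The poset of all `F`-linear subspaces of `F^d`, ordered by inclusion,
is shellable: its maximal chains (regarded as finite sets of subspaces) admit an enumeration
`m 0, m 1, …` such that for all `i < j` there exist `k < j` and `x ∈ m j` with
`m i ∩ m j ⊆ m k ∩ m j = m j \ {x}`. -/
theorem stmt_4 (F : Type) [Field F] [Fintype F] (d : ℕ) (hd : 1 ≤ d) :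
    ∃ (t : ℕ) (m : Fin t → Finset (Submodule F (Fin d → F))),
      (∀ j : Fin t, IsMaxChain (· ≤ ·) ((m j : Finset (Submodule F (Fin d → F))) : Set (Submodule F (Fin d → F)))) ∧
      (∀ c : Finset (Submodule F (Fin d → F)),
        IsMaxChain (· ≤ ·) (c : Set (Submodule F (Fin d → F))) → ∃! j : Fin t, m j = c) ∧
      ∀ i j : Fin t, i < j → ∃ k : Fin t, k < j ∧ ∃ x ∈ m j,
        m i ∩ m j ⊆ m k ∩ m j ∧ m k ∩ m j = (m j).erase x := by
  exact stmt_4_general (Submodule F (Fin d → F))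
end

section
/- Let P₁ and P₂ be finite pure shellable posets. Define the join P₁ * P₂ as the poset on the disjoint union of P₁ and P₂ in which a ≤ b if and only if (a, b ∈ P₁ and a ≤ b in P₁) or (a, b ∈ P₂ and a ≤ b in P₂) or (a ∈ P₁ and b ∈ P₂). Then P₁ * P₂ is pure and shellable. -/
open scoped Classical

/-- `m` is a maximal chain (as a finite set) with respect to the relation `r`. -/
def IsMaxChainOf {α : Type} (r : α → α → Prop) (m : Finset α) : Prop :=
  IsMaxChain r (m : Set α)

/-- A finite relation is pure if all of its maximal chains have the same cardinality. -/
def PureRel (α : Type) [Fintype α] (r : α → α → Prop) : Prop :=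
  ∀ m m' : Finset α, IsMaxChainOf r m → IsMaxChainOf r m' → m.card = m'.card

/-- A finite relation is shellable if its maximal chains admit an enumeration
`m 0, m 1, …` such that for all `i < j` there exist `k < j` and `x ∈ m j` with
`m i ∩ m j ⊆ m k ∩ m j = m j \ {x}`. -/
def ShellableRel (α : Type) [Fintype α] (r : α → α → Prop) : Prop :=
  ∃ (t : ℕ) (m : Fin t → Finset α),
    (∀ j : Fin t, IsMaxChainOf r (m j)) ∧
    (∀ c : Finset α, IsMaxChainOf r c → ∃! j : Fin t, m j = c) ∧
    ∀ i j : Fin t, i < j → ∃ k : Fin t, k < j ∧ ∃ x ∈ m j,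
      m i ∩ m j ⊆ m k ∩ m j ∧ m k ∩ m j = (m j).erase x

/-- The order relation of the join `P₁ * P₂` of two posets, on the disjoint union:
within each summand it is the given order, and every element of `P₁` is below every
element of `P₂`. -/
def joinRel {α β : Type} [PartialOrder α] [PartialOrder β] :
    α ⊕ β → α ⊕ β → Prop
  | Sum.inl a, Sum.inl b => a ≤ b
  | Sum.inr a, Sum.inr b => a ≤ b
  | Sum.inl _, Sum.inr _ => True
  | Sum.inr _, Sum.inl _ => False

/-!
The join is the lexicographic sum of the two orders, so a maximal chain of `P₁ * P₂` is the disjoint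
union `A ⊔ B` of a maximal chain of `P₁` and one of `P₂`; this gives purity by adding cardinalities.
Shellings `A₁, A₂, …` and `B₁, B₂, …` combine into the family `A_a ⊔ B_b` ordered lexicographically.
If `(a, b) < (c, d)` with `a < c`, exchange within the first shelling and keep `B_d`: the witness
`A_k ⊔ B_d` meets `A_c ⊔ B_d` in all but a point of `A_c`, and contains `(A_a ∩ A_c) ⊔ (B_b ∩ B_d)`.
If `a = c` and `b < d`, keep `A_c` and exchange within the second shelling.
-/

section MaxChain

variable {α β : Type*} {r : α → α → Prop} {s : β → β → Prop}

theorem isChain_sumLex_iff {u : Set (α ⊕ β)} :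
    IsChain (Sum.Lex r s) u ↔ IsChain r (Sum.inl ⁻¹' u) ∧ IsChain s (Sum.inr ⁻¹' u) := by
  refine ⟨fun hu ↦ ⟨hu.preimage_relEmbedding (.sumLexInl r s),
    hu.preimage_relEmbedding (.sumLexInr r s)⟩, ?_⟩
  rintro ⟨hl, hr⟩ (a | b) hx (a' | b') hy hxy
  · exact (hl hx hy (ne_of_apply_ne Sum.inl hxy)).imp .inl .inl
  · exact .inl (.sep a b')
  · exact .inr (.sep a' b)
  · exact (hr hx hy (ne_of_apply_ne Sum.inr hxy)).imp .inr .inr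

theorem isMaxChain_sumLex_iff {u : Set (α ⊕ β)} :
    IsMaxChain (Sum.Lex r s) u ↔ IsMaxChain r (Sum.inl ⁻¹' u) ∧ IsMaxChain s (Sum.inr ⁻¹' u) := by
  constructor
  · rintro ⟨hu, hmax⟩
    obtain ⟨hl, hr⟩ := isChain_sumLex_iff.1 hu
    have eq_sumEquiv_symm {v : Set α} {w : Set β} (hv : IsChain r v) (hw : IsChain s w)
        (huv : Sum.inl ⁻¹' u ⊆ v) (huw : Sum.inr ⁻¹' u ⊆ w) : u = Set.sumEquiv.symm (v, w) := by
      refine hmax (isChain_sumLex_iff.2 ?_) (Set.sumEquiv.le_symm_apply.2 ⟨huv, huw⟩)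
      simpa [Set.preimage_image_eq _ Sum.inl_injective, Set.preimage_image_eq _ Sum.inr_injective]
        using And.intro hv hw
    refine ⟨⟨hl, fun v hv huv ↦ ?_⟩, ⟨hr, fun w hw huw ↦ ?_⟩⟩
    · exact congrArg Prod.fst
        (Set.sumEquiv.eq_symm_apply.1 (eq_sumEquiv_symm hv hr huv subset_rfl))
    · exact congrArg Prod.snd
        (Set.sumEquiv.eq_symm_apply.1 (eq_sumEquiv_symm hl hw subset_rfl huw))
  · rintro ⟨⟨hl, hlmax⟩, ⟨hr, hrmax⟩⟩
    refine ⟨isChain_sumLex_iff.2 ⟨hl, hr⟩, fun t ht hut ↦ Set.sumEquiv.injective ?_⟩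
    obtain ⟨htl, htr⟩ := isChain_sumLex_iff.1 ht
    exact Prod.ext (hlmax htl (Set.preimage_mono hut)) (hrmax htr (Set.preimage_mono hut))

end MaxChain

section DisjSum

variable {α β : Type*} [DecidableEq (α ⊕ β)]

theorem disjSum_inter_disjSum [DecidableEq α] [DecidableEq β] (A C : Finset α) (B D : Finset β) :
    A.disjSum B ∩ C.disjSum D = (A ∩ C).disjSum (B ∩ D) := by
  ext (a | b) <;> simp

theorem disjSum_erase_inl [DecidableEq α] (A : Finset α) (B : Finset β) (a : α) :
    (A.disjSum B).erase (.inl a) = (A.erase a).disjSum B := by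
  ext (a' | b) <;> simp

theorem disjSum_erase_inr [DecidableEq β] (A : Finset α) (B : Finset β) (b : β) :
    (A.disjSum B).erase (.inr b) = A.disjSum (B.erase b) := by
  ext (a | b') <;> simp

end DisjSum

section Join

variable {α β : Type} {r : α → α → Prop} {s : β → β → Prop}

theorem isMaxChainOf_sumLex_iff {c : Finset (α ⊕ β)} :
    IsMaxChainOf (Sum.Lex r s) c ↔ IsMaxChainOf r c.toLeft ∧ IsMaxChainOf s c.toRight := by
  have hl : (c.toLeft : Set α) = Sum.inl ⁻¹' (c : Set (α ⊕ β)) := by ext; simp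
  have hr : (c.toRight : Set β) = Sum.inr ⁻¹' (c : Set (α ⊕ β)) := by ext; simp
  simp only [IsMaxChainOf, isMaxChain_sumLex_iff, hl, hr]

theorem PureRel.sumLex [Fintype α] [Fintype β] (hr : PureRel α r) (hs : PureRel β s) :
    PureRel (α ⊕ β) (Sum.Lex r s) := by
  intro c c' hc hc'
  obtain ⟨hleft, hright⟩ := isMaxChainOf_sumLex_iff.1 hc
  obtain ⟨hleft', hright'⟩ := isMaxChainOf_sumLex_iff.1 hc'
  rw [← c.card_toLeft_add_card_toRight, ← c'.card_toLeft_add_card_toRight,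
    hr _ _ hleft hleft', hs _ _ hright hright']

/-- The exchange condition of a shelling: `A ∩ C` lies in `K ∩ C`, and `K ∩ C` is a ridge of `C`,
that is, `C` with one element removed. -/
def MeetsInRidge (A K C : Finset α) : Prop :=
  ∃ x ∈ C, A ∩ C ⊆ K ∩ C ∧ K ∩ C = C.erase x

theorem MeetsInRidge.disjSum_left {A K C : Finset α} (h : MeetsInRidge A K C) (B D : Finset β) :
    MeetsInRidge (A.disjSum B) (K.disjSum D) (C.disjSum D) := by
  obtain ⟨x, hx, hsub, heq⟩ := h
  refine ⟨.inl x, Finset.inl_mem_disjSum.2 hx, ?_, ?_⟩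
  · simpa only [disjSum_inter_disjSum, Finset.inter_self]
      using Finset.disjSum_mono hsub Finset.inter_subset_right
  · simp only [disjSum_inter_disjSum, heq, Finset.inter_self, disjSum_erase_inl]

theorem MeetsInRidge.disjSum_right {B K D : Finset β} (h : MeetsInRidge B K D) (A C : Finset α) :
    MeetsInRidge (A.disjSum B) (C.disjSum K) (C.disjSum D) := by
  obtain ⟨x, hx, hsub, heq⟩ := h
  refine ⟨.inr x, Finset.inr_mem_disjSum.2 hx, ?_, ?_⟩
  · simpa only [disjSum_inter_disjSum, Finset.inter_self]
      using Finset.disjSum_mono Finset.inter_subset_right hsub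
  · simp only [disjSum_inter_disjSum, heq, Finset.inter_self, disjSum_erase_inr]

/-- `m` is a shelling order of the maximal chains of `r`. The index type is an arbitrary order
rather than `Fin t`, so that products of shellings can be indexed lexicographically. -/
structure IsShelling {ι : Type*} [LT ι] (r : α → α → Prop) (m : ι → Finset α) : Prop where
  isMaxChainOf : ∀ j, IsMaxChainOf r (m j)
  existsUnique : ∀ c, IsMaxChainOf r c → ∃! j, m j = c
  exchange : ∀ i j, i < j → ∃ k < j, MeetsInRidge (m i) (m k) (m j)

theorem shellableRel_iff_exists_isShelling [Fintype α] :
    ShellableRel α r ↔ ∃ (t : ℕ) (m : Fin t → Finset α), IsShelling r m :=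
  ⟨fun ⟨t, m, hmax, huniq, hexch⟩ ↦ ⟨t, m, hmax, huniq, hexch⟩,
    fun ⟨t, m, hmax, huniq, hexch⟩ ↦ ⟨t, m, hmax, huniq, hexch⟩⟩

namespace IsShelling

variable {ι κ : Type*} {m : ι → Finset α} {n : κ → Finset β}

theorem comp_orderIso [Preorder ι] [Preorder κ] (hm : IsShelling r m) (e : κ ≃o ι) :
    IsShelling r (m ∘ e) where
  isMaxChainOf j := hm.isMaxChainOf (e j)
  existsUnique c hc := e.toEquiv.existsUnique_congr_right.2 (hm.existsUnique c hc)
  exchange i j hij := by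
    obtain ⟨k, hk, hridge⟩ := hm.exchange (e i) (e j) (e.lt_iff_lt.2 hij)
    exact ⟨e.symm k, e.symm_apply_lt.2 hk, by simpa using hridge⟩

theorem shellableRel [Fintype α] [Finite ι] [LinearOrder ι] (hm : IsShelling r m) :
    ShellableRel α r :=
  have := Fintype.ofFinite ι
  shellableRel_iff_exists_isShelling.2
    ⟨_, _, hm.comp_orderIso (Fintype.orderIsoFinOfCardEq ι rfl)⟩

theorem sumLex [LT ι] [LT κ] (hm : IsShelling r m) (hn : IsShelling s n) :
    IsShelling (Sum.Lex r s) fun i : ι ×ₗ κ ↦ (m (ofLex i).1).disjSum (n (ofLex i).2) where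
  isMaxChainOf j := isMaxChainOf_sumLex_iff.2
    (by simpa using ⟨hm.isMaxChainOf _, hn.isMaxChainOf _⟩)
  existsUnique c hc := by
    obtain ⟨hl, hr⟩ := isMaxChainOf_sumLex_iff.1 hc
    obtain ⟨a, ha, ha_unique⟩ := hm.existsUnique _ hl
    obtain ⟨b, hb, hb_unique⟩ := hn.existsUnique _ hr
    refine ⟨toLex (a, b), Finset.disjSum_eq_iff.2 ⟨ha, hb⟩, fun j hj ↦ ?_⟩
    obtain ⟨hja, hjb⟩ := Finset.disjSum_eq_iff.1 hj
    exact ofLex.injective (Prod.ext (ha_unique _ hja) (hb_unique _ hjb))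
  exchange := by
    rintro ⟨a, b⟩ ⟨c, d⟩ hij
    obtain hac | ⟨rfl, hbd⟩ := Prod.Lex.toLex_lt_toLex.1 hij
    · obtain ⟨k, hk, hridge⟩ := hm.exchange a c hac
      exact ⟨toLex (k, d), Prod.Lex.toLex_lt_toLex.2 (.inl hk), hridge.disjSum_left _ _⟩
    · obtain ⟨k, hk, hridge⟩ := hn.exchange b d hbd
      exact ⟨toLex (a, k), Prod.Lex.toLex_lt_toLex.2 (.inr ⟨rfl, hk⟩), hridge.disjSum_right _ _⟩

end IsShelling

theorem ShellableRel.sumLex [Fintype α] [Fintype β] (hr : ShellableRel α r)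
    (hs : ShellableRel β s) : ShellableRel (α ⊕ β) (Sum.Lex r s) := by
  obtain ⟨t, m, hm⟩ := shellableRel_iff_exists_isShelling.1 hr
  obtain ⟨u, n, hn⟩ := shellableRel_iff_exists_isShelling.1 hs
  exact (hm.sumLex hn).shellableRel

theorem joinRel_eq_sumLex [PartialOrder α] [PartialOrder β] :
    (joinRel : α ⊕ β → α ⊕ β → Prop) = Sum.Lex (· ≤ ·) (· ≤ ·) := by
  ext (a | b) (a' | b') <;> simp [joinRel]

theorem stmt_5_general [Fintype α] [Fintype β]
    (hr_pure : PureRel α r) (hr_shell : ShellableRel α r)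
    (hs_pure : PureRel β s) (hs_shell : ShellableRel β s) :
    PureRel (α ⊕ β) (Sum.Lex r s) ∧ ShellableRel (α ⊕ β) (Sum.Lex r s) :=
  ⟨hr_pure.sumLex hs_pure, hr_shell.sumLex hs_shell⟩

end Join

/-- The join of two finite pure shellable posets is pure and shellable. -/
theorem stmt_5 (P₁ P₂ : Type) [Fintype P₁] [Fintype P₂]
    [PartialOrder P₁] [PartialOrder P₂]
    (h₁pure : PureRel P₁ (· ≤ ·)) (h₁shell : ShellableRel P₁ (· ≤ ·))
    (h₂pure : PureRel P₂ (· ≤ ·)) (h₂shell : ShellableRel P₂ (· ≤ ·)) :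
    PureRel (P₁ ⊕ P₂) joinRel ∧ ShellableRel (P₁ ⊕ P₂) joinRel := by
  rw [joinRel_eq_sumLex]
  exact stmt_5_general h₁pure h₁shell h₂pure h₂shell
end

section
/- Let d ≥ 2 and let X be a finite pure d-dimensional simplicial complex (a downward-closed family of finite subsets of a finite vertex set, all of whose maximal faces have d+1 elements). Suppose X is shellable: its maximal faces admit an enumeration σ₁, …, σ_t such that for every j > 1, (a) some d-element subset of σ_j is contained in some σ_i with i < j, and (b) every subset of σ_j that is contained in some σ_i with i < j is contained in a d-element subset of σ_j that is itself contained in some σ_{i′} with i′ < j. Then for every group Γ, every Γ-valued 1-cocycle on X is a 1-coboundary. -/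
open Finset
open scoped Classical

/-!
Two potentials of the same cochain on a simplex differ by a constant right factor. So when a simplex
is glued to a complex along a connected subcomplex, a potential on the complex and one on the
simplex differ on the overlap by one constant, and translating the latter by it extends the former.
In a shelling whose facets have at least three vertices each attaching subcomplex is connected: any
two of its vertices lie in codimension-one faces of the new facet contained in it, and two such
faces share a vertex.
-/

/-- Transfinite dependent choice: `R j c a` says that `a` is an admissible value at `j` after the
earlier values `c`. -/
theorem exists_forall_of_forall_lt_exists {ι : Type*} [Preorder ι] [WellFoundedLT ι] {α : ι → Type*}
    [∀ j, Nonempty (α j)] (R : ∀ j, (∀ i < j, α i) → α j → Prop)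
    (hR : ∀ j c, (∀ i (hi : i < j), R i (fun k hk ↦ c k (hk.trans hi)) (c i hi)) → ∃ a, R j c a) :
    ∃ c : ∀ j, α j, ∀ j, R j (fun i _ ↦ c i) (c j) := by
  let c : ∀ j, α j := WellFoundedLT.fix fun j c ↦ Classical.epsilon (R j c)
  refine ⟨c, fun j ↦ ?_⟩
  induction j using WellFoundedLT.induction with
  | ind j ih =>
    have hcj : c j = Classical.epsilon (R j fun i _ ↦ c i) := WellFoundedLT.fix_eq _ j
    rw [hcj]
    exact Classical.epsilon_spec (hR j (fun i _ ↦ c i) ih)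

theorem exists_forall_eqOn_of_eqOn_inter {ι V β : Type*} [LinearOrder ι] [Nonempty β]
    {s : ι → Set V} {G : ι → V → β} (hG : ∀ j, ∀ i < j, Set.EqOn (G i) (G j) (s i ∩ s j)) :
    ∃ g : V → β, ∀ i, Set.EqOn g (G i) (s i) := by
  have hval : ∀ v, ∃ b, ∀ i, v ∈ s i → b = G i v := by
    intro v
    by_cases hv : ∃ k, v ∈ s k
    · obtain ⟨k, hk⟩ := hv
      refine ⟨G k v, fun i hi ↦ ?_⟩
      rcases lt_trichotomy k i with h | rfl | h
      · exact hG i k h ⟨hk, hi⟩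
      · rfl
      · exact (hG k i h ⟨hi, hk⟩).symm
    · exact ⟨Classical.arbitrary β, fun i hi ↦ absurd ⟨i, hi⟩ hv⟩
  choose g hg using hval
  exact ⟨g, fun i v hv ↦ hg v i hv⟩

section Potentials

variable {V Γ : Type*} [Group Γ] {f : V → V → Γ} {g h : V → Γ} {s t : Set V}

/-- `g` is a potential of the cochain `f` on the simplex with vertex set `s`: there `f` is the
coboundary of `g`. The diagonal values `f v v` carry no information and are left unconstrained. -/
def IsPotentialOn (f : V → V → Γ) (g : V → Γ) (s : Set V) : Prop :=
  s.Pairwise fun u v ↦ f u v = g u * (g v)⁻¹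

namespace IsPotentialOn

theorem congr (hg : IsPotentialOn f g s) (hgh : Set.EqOn g h s) : IsPotentialOn f h s :=
  fun u hu v hv huv ↦ by simpa only [hgh hu, hgh hv] using hg hu hv huv

theorem mul_const (hg : IsPotentialOn f g s) (c : Γ) : IsPotentialOn f (fun v ↦ g v * c) s :=
  fun u hu v hv huv ↦ by simpa only [mul_inv_rev, mul_assoc, mul_inv_cancel_left] using hg hu hv huv

theorem inv_mul_eq_inv_mul (hg : IsPotentialOn f g s) (hh : IsPotentialOn f h t) {u v : V}
    (hu : u ∈ s ∩ t) (hv : v ∈ s ∩ t) : (h u)⁻¹ * g u = (h v)⁻¹ * g v := by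
  obtain rfl | huv := eq_or_ne u v
  · rfl
  · have hfuv : g u * (g v)⁻¹ = h u * (h v)⁻¹ :=
      (hg hu.1 hv.1 huv).symm.trans (hh hu.2 hv.2 huv)
    rw [inv_mul_eq_iff_eq_mul, ← mul_assoc, ← hfuv, inv_mul_cancel_right]

end IsPotentialOn

theorem exists_isPotentialOn_of_cocycle (hinv : s.Pairwise fun u v ↦ f u v = (f v u)⁻¹)
    (hmul : ∀ u ∈ s, ∀ v ∈ s, ∀ w ∈ s, u ≠ v → v ≠ w → u ≠ w → f u v * f v w * f w u = 1) :
    ∃ g, IsPotentialOn f g s := by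
  obtain rfl | ⟨x, hx⟩ := s.eq_empty_or_nonempty
  · exact ⟨1, Set.pairwise_empty _⟩
  refine ⟨Function.update (f · x) x 1, fun u hu v hv huv ↦ ?_⟩
  obtain rfl | hux := eq_or_ne u x
  · simpa [huv.symm] using hinv hu hv huv
  obtain rfl | hvx := eq_or_ne v x
  · simp [huv]
  · rw [Function.update_of_ne hux, Function.update_of_ne hvx, hinv hu hx hux]
    exact eq_mul_inv_of_mul_eq (eq_inv_of_mul_eq_one_left (hmul u hu v hv x hx huv hvx hux))

end Potentials

section Gluing

variable {ι V Γ : Type*} [Group Γ] {f : V → V → Γ} {g h : V → Γ} {s : ι → Set V} {j : ι}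

/-- The edges along which the simplex on `s j` is glued to the simplices on `s i`, `i < j`. The
attaching vertices are the degenerate attaching edges, those with `u = v`. -/
def AttachingEdge [LT ι] (s : ι → Set V) (j : ι) (u v : V) : Prop :=
  ∃ i < j, u ∈ s i ∩ s j ∧ v ∈ s i ∩ s j

/-- Connectedness of the subcomplex along which the simplex on `s j` is glued to the earlier ones.
The empty subcomplex is allowed. -/
def AttachingConnected [LT ι] (s : ι → Set V) (j : ι) : Prop :=
  ∀ u v, AttachingEdge s j u u → AttachingEdge s j v v →
    Relation.ReflTransGen (AttachingEdge s j) u v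

theorem AttachingConnected.exists_eq_mul_const [LT ι] (hconn : AttachingConnected s j)
    (hg : ∀ i < j, IsPotentialOn f g (s i)) (hh : IsPotentialOn f h (s j)) :
    ∃ c, ∀ i < j, ∀ v ∈ s i ∩ s j, g v = h v * c := by
  by_cases hne : ∃ x, AttachingEdge s j x x
  · obtain ⟨x, hx⟩ := hne
    refine ⟨(h x)⁻¹ * g x, fun i hi v hv ↦ ?_⟩
    have hchain := hconn x v hx ⟨i, hi, hv, hv⟩
    rw [← inv_mul_eq_iff_eq_mul]
    clear hv
    induction hchain with
    | refl => rfl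
    | tail _ hedge ih =>
      obtain ⟨k, hk, hu, hw⟩ := hedge
      exact ((hg k hk).inv_mul_eq_inv_mul hh hw hu).trans ih
  · exact ⟨1, fun i hi v hv ↦ absurd ⟨v, i, hi, hv, hv⟩ hne⟩

theorem AttachingConnected.exists_isPotentialOn_eqOn [LT ι] (hconn : AttachingConnected s j)
    (hg : ∀ i < j, IsPotentialOn f g (s i)) (hs : ∃ h, IsPotentialOn f h (s j)) :
    ∃ h, IsPotentialOn f h (s j) ∧ ∀ i < j, Set.EqOn g h (s i ∩ s j) := by
  obtain ⟨h, hh⟩ := hs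
  obtain ⟨c, hc⟩ := hconn.exists_eq_mul_const hg hh
  exact ⟨fun v ↦ h v * c, hh.mul_const c, hc⟩

theorem exists_forall_isPotentialOn_of_attachingConnected [LinearOrder ι] [WellFoundedLT ι]
    (hs : ∀ j, ∃ h, IsPotentialOn f h (s j)) (hconn : ∀ j, AttachingConnected s j) :
    ∃ g, ∀ j, IsPotentialOn f g (s j) := by
  obtain ⟨G, hG⟩ : ∃ G : ι → V → Γ, ∀ j, IsPotentialOn f (G j) (s j) ∧
      ∀ i < j, Set.EqOn (G i) (G j) (s i ∩ s j) := by
    refine exists_forall_of_forall_lt_exists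
      (fun j G h ↦ IsPotentialOn f h (s j) ∧ ∀ i (hi : i < j), Set.EqOn (G i hi) h (s i ∩ s j))
      fun j G hG ↦ ?_
    obtain ⟨g, hg⟩ := exists_forall_eqOn_of_eqOn_inter (s := fun i : Set.Iio j ↦ s i)
      (G := fun i ↦ G i i.2) fun i k hk ↦ (hG i i.2).2 k hk
    obtain ⟨h, hh, hgh⟩ := (hconn j).exists_isPotentialOn_eqOn
      (fun i hi ↦ (hG i hi).1.congr (hg ⟨i, hi⟩).symm) (hs j)
    exact ⟨h, hh, fun i hi v hv ↦ (hg ⟨i, hi⟩ hv.1).symm.trans (hgh i hi hv)⟩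
  obtain ⟨g, hg⟩ := exists_forall_eqOn_of_eqOn_inter fun j ↦ (hG j).2
  exact ⟨g, fun j ↦ (hG j).1.congr (hg j).symm⟩

end Gluing

section Shelling

variable {ι V : Type*} {σ : ι → Finset V}

/-- The facets `σ j` are listed in a shelling order: every face that `σ j` shares with an earlier
facet lies in a codimension-one face of `σ j` that is contained in an earlier facet. The facets may
have different dimensions and the list may be infinite. -/
def IsShelling_s6 [LT ι] (σ : ι → Finset V) : Prop :=
  ∀ j, ∀ s ⊆ σ j, (∃ i < j, s ⊆ σ i) →
    ∃ e, s ⊆ e ∧ e ⊆ σ j ∧ #e + 1 = #(σ j) ∧ ∃ i < j, e ⊆ σ i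

theorem IsShelling_s6.attachingConnected [LT ι] (hσ : IsShelling_s6 σ) {j : ι} (hj : 3 ≤ #(σ j)) :
    AttachingConnected (fun i ↦ (σ i : Set V)) j := by
  have exists_ridge : ∀ v, AttachingEdge (fun i ↦ (σ i : Set V)) j v v →
      ∃ e ⊆ σ j, v ∈ e ∧ #e + 1 = #(σ j) ∧ ∃ i < j, e ⊆ σ i := by
    rintro v ⟨i, hi, ⟨hvi, hvj⟩, -⟩
    obtain ⟨e, hve, he⟩ := hσ j {v} (singleton_subset_iff.2 hvj) ⟨i, hi, singleton_subset_iff.2 hvi⟩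
    exact ⟨e, he.1, singleton_subset_iff.1 hve, he.2⟩
  intro u v hu hv
  obtain ⟨e, hej, hue, he, i, hi, hei⟩ := exists_ridge u hu
  obtain ⟨e', hej', hve', he', i', hi', hei'⟩ := exists_ridge v hv
  obtain ⟨w, hw⟩ := inter_nonempty_of_card_lt_card_add_card hej hej' (by omega)
  obtain ⟨hwe, hwe'⟩ := mem_inter.1 hw
  have huw : AttachingEdge (fun i ↦ (σ i : Set V)) j u w :=
    ⟨i, hi, ⟨hei hue, hej hue⟩, ⟨hei hwe, hej hwe⟩⟩
  have hwv : AttachingEdge (fun i ↦ (σ i : Set V)) j w v :=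
    ⟨i', hi', ⟨hei' hwe', hej' hwe'⟩, ⟨hei' hve', hej' hve'⟩⟩
  exact .tail (.single huw) hwv

theorem exists_superset_of_forall_maximal {X : Finset (Finset V)}
    (hσ : ∀ c ∈ X, (∀ τ ∈ X, c ⊆ τ → τ = c) → ∃ j, σ j = c) {s : Finset V} (hs : s ∈ X) :
    ∃ j, s ⊆ σ j := by
  obtain ⟨c, hsc, hc⟩ := X.exists_le_maximal hs
  obtain ⟨j, rfl⟩ := hσ c hc.prop fun τ hτ hcτ ↦ (hc.eq_of_le hτ hcτ).symm
  exact ⟨j, hsc⟩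

end Shelling

theorem stmt_6_general {ι V Γ : Type*} [LinearOrder ι] [WellFoundedLT ι] [DecidableEq V] [Group Γ]
    {X : Set (Finset V)} (hdown : ∀ s ∈ X, ∀ t ⊆ s, t ∈ X)
    {σ : ι → Finset V} (hmem : ∀ j, σ j ∈ X) (hcover : ∀ s ∈ X, ∃ j, s ⊆ σ j)
    (hcard : ∀ j, 3 ≤ #(σ j)) (hσ : IsShelling_s6 σ) {f : V → V → Γ}
    (hanti : ∀ u v : V, u ≠ v → ({u, v} : Finset V) ∈ X → f u v = (f v u)⁻¹)
    (hcocycle : ∀ u v w : V, u ≠ v → v ≠ w → u ≠ w →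
      ({u, v, w} : Finset V) ∈ X → f u v * f v w * f w u = 1) :
    ∃ g : V → Γ, ∀ u v : V, u ≠ v → ({u, v} : Finset V) ∈ X → f u v = g u * (g v)⁻¹ := by
  have hlocal : ∀ j, ∃ h, IsPotentialOn f h (σ j : Set V) := fun j ↦ exists_isPotentialOn_of_cocycle
    (fun u hu v hv huv ↦ hanti u v huv <|
      hdown _ (hmem j) _ (by simp_all [insert_subset_iff]))
    fun u hu v hv w hw huv hvw huw ↦ hcocycle u v w huv hvw huw <|
      hdown _ (hmem j) _ (by simp_all [insert_subset_iff])
  obtain ⟨g, hg⟩ := exists_forall_isPotentialOn_of_attachingConnected hlocal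
    fun j ↦ hσ.attachingConnected (hcard j)
  refine ⟨g, fun u v huv huvX ↦ ?_⟩
  obtain ⟨j, hj⟩ := hcover _ huvX
  exact hg j (hj (by simp)) (hj (by simp)) huv

/-- Let `X` be a finite pure `d`-dimensional simplicial complex (`d ≥ 2`),
given as a downward-closed family of finite subsets of a finite vertex set whose maximal
faces all have `d+1` elements.  If `X` is shellable — its maximal faces admit an enumeration
`σ 0, σ 1, …` such that for every `j > 0`: (a) some `d`-element subset of `σ j` is contained
in an earlier `σ i`, and (b) every subset of `σ j` contained in an earlier `σ i` is contained
in a `d`-element subset of `σ j` that is itself contained in an earlier `σ i'` — then for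
every group `Γ`, every `Γ`-valued 1-cocycle on `X` is a 1-coboundary. -/
theorem stmt_6 (V : Type) [Fintype V] [DecidableEq V]
    (d : ℕ) (hd : 2 ≤ d)
    (X : Finset (Finset V))
    (hdown : ∀ s ∈ X, ∀ t ⊆ s, t ∈ X)
    (hpure : ∀ σ ∈ X, (∀ τ ∈ X, σ ⊆ τ → τ = σ) → σ.card = d + 1)
    (t : ℕ) (σ : Fin t → Finset V)
    (hmem : ∀ j : Fin t, σ j ∈ X ∧ ∀ τ ∈ X, σ j ⊆ τ → τ = σ j)
    (henum : ∀ c ∈ X, (∀ τ ∈ X, c ⊆ τ → τ = c) → ∃! j : Fin t, σ j = c)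
    (ha : ∀ j : Fin t, 0 < (j : ℕ) →
      ∃ e ⊆ σ j, e.card = d ∧ ∃ i : Fin t, (i : ℕ) < (j : ℕ) ∧ e ⊆ σ i)
    (hb : ∀ j : Fin t, 0 < (j : ℕ) → ∀ s ⊆ σ j,
      (∃ i : Fin t, (i : ℕ) < (j : ℕ) ∧ s ⊆ σ i) →
      ∃ e, s ⊆ e ∧ e ⊆ σ j ∧ e.card = d ∧
        ∃ i' : Fin t, (i' : ℕ) < (j : ℕ) ∧ e ⊆ σ i')
    (Γ : Type) [Group Γ]
    (f : V → V → Γ)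
    (hanti : ∀ u v : V, u ≠ v → ({u, v} : Finset V) ∈ X → f u v = (f v u)⁻¹)
    (hcocycle : ∀ u v w : V, u ≠ v → v ≠ w → u ≠ w →
      ({u, v, w} : Finset V) ∈ X → f u v * f v w * f w u = 1) :
    ∃ g : V → Γ, ∀ u v : V, u ≠ v → ({u, v} : Finset V) ∈ X →
      f u v = g u * (g v)⁻¹ := by
  have hcard : ∀ j, #(σ j) = d + 1 := fun j ↦ hpure _ (hmem j).1 (hmem j).2
  have hshell : IsShelling_s6 σ := by
    rintro j s hs ⟨i, hi, hsi⟩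
    simpa only [hcard j, Nat.add_right_cancel_iff, Fin.lt_def] using
      hb j (Nat.zero_lt_of_lt hi) s hs ⟨i, hi, hsi⟩
  exact stmt_6_general hdown (fun j ↦ (hmem j).1)
    (fun _ ↦ exists_superset_of_forall_maximal fun c hc hmax ↦ (henum c hc hmax).exists)
    (fun j ↦ by rw [hcard j]; omega) hshell hanti hcocycle
end

section
/- Let q be a prime power, F a finite field with q elements, d ≥ 3 an integer, S ⊆ {1,…,d−1} with |S| ≥ 2, Γ any group, and let s be a face of the projected flags complex B(d,S,q) with |S| − |s| ≥ 3 (s possibly empty). The link of s is the simplicial complex whose vertices are the subspaces W with dim(W) ∈ S, W ∉ s and s ∪ {W} a chain, and whose faces are the sets t of such subspaces with s ∪ t a chain. Then every Γ-valued 1-cocycle on the link of s is a 1-coboundary. -/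
open Finset
open scoped Classical

/-!
The subspaces comparable with every member of the chain `s` form a modular lattice, graded by
dimension, and the link of `s` is the order complex of the elements of this lattice whose rank lies
in `T = S \ dim s`. So it suffices to trivialize a cocycle on a rank-selected semimodular lattice
with `|T| ≥ 3`, and this is done on upper intervals `[x, ⊤]` by downward induction on the rank of
`x`. If the rank of `x` is `min T`, the interval is a cone with apex `x`. If it is smaller, the
intervals `[p, ⊤]` with `p` covering `x` carry trivializations by induction. Two of them differ by
a constant on `[p ⊔ p', ⊤]`, because rank selections of size two are connected; normalizing each to
agree with that of a fixed `p₀` makes all of them agree pairwise, since `p ⊔ p' ⊔ p₀` lies below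
an element of rank `max T`, and they glue.
-/

section Graded

variable {α : Type*} [PartialOrder α] [GradeOrder ℕ α] {x y : α} {k : ℕ}

theorem exists_covBy_le_of_grade_lt (hxy : x ≤ y) (h : grade ℕ x < grade ℕ y) :
    ∃ p, x ⋖ p ∧ p ≤ y := by
  have : WellFoundedLT α := (grade_strictMono (𝕆 := ℕ)).wellFoundedLT
  exact exists_covBy_le_of_lt (hxy.lt_of_ne (by rintro rfl; exact h.false))

theorem grade_eq_grade_add_one_of_covBy (h : x ⋖ y) : grade ℕ y = grade ℕ x + 1 :=
  (Nat.covBy_iff_add_one_eq.1 (h.grade ℕ)).symm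

theorem exists_mem_Icc_grade_eq (hxy : x ≤ y) (hx : grade ℕ x ≤ k) (hy : k ≤ grade ℕ y) :
    ∃ z ∈ Set.Icc x y, grade ℕ z = k := by
  induction k, hx using Nat.le_induction with
  | base => exact ⟨x, ⟨le_rfl, hxy⟩, rfl⟩
  | succ k _ ih =>
    obtain ⟨z, ⟨hxz, hzy⟩, rfl⟩ := ih (by omega)
    obtain ⟨p, hzp, hpy⟩ := exists_covBy_le_of_grade_lt hzy hy
    exact ⟨p, ⟨hxz.trans hzp.le, hpy⟩, grade_eq_grade_add_one_of_covBy hzp⟩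

theorem exists_ge_grade_eq [OrderTop α] (hx : grade ℕ x ≤ k) (hk : k ≤ grade ℕ (⊤ : α)) :
    ∃ z, x ≤ z ∧ grade ℕ z = k :=
  let ⟨z, hz, hzk⟩ := exists_mem_Icc_grade_eq le_top hx hk
  ⟨z, hz.1, hzk⟩

end Graded

section Cocycle

variable {α Γ : Type*} [Group Γ] {f : α → α → Γ} {g g' : α → Γ} {P : Set α}

/-- `f` restricts to a `Γ`-valued 1-cocycle on the order complex of `P`. Only the values on
ascending pairs are recorded, and taking `x = y = z` normalizes `f x x = 1`. -/
def IsCocycleOn [LE α] (f : α → α → Γ) (P : Set α) : Prop :=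
  ∀ ⦃x⦄, x ∈ P → ∀ ⦃y⦄, y ∈ P → ∀ ⦃z⦄, z ∈ P → x ≤ y → y ≤ z → f x z = f x y * f y z

/-- The 0-cochain `g` exhibits `f` as a 1-coboundary on the order complex of `P`. -/
def TrivializesOn [LE α] (g : α → Γ) (f : α → α → Γ) (P : Set α) : Prop :=
  ∀ ⦃x⦄, x ∈ P → ∀ ⦃y⦄, y ∈ P → x ≤ y → f x y = g x * (g y)⁻¹

theorem TrivializesOn.mono [LE α] (hg : TrivializesOn g f P) {Q : Set α} (h : Q ⊆ P) :
    TrivializesOn g f Q := fun _ hx _ hy => hg (h hx) (h hy)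

theorem TrivializesOn.mul_const [LE α] (hg : TrivializesOn g f P) (γ : Γ) :
    TrivializesOn (fun y => g y * γ) f P := fun x hx y hy hxy => by
  rw [hg hx hy hxy]
  group

theorem TrivializesOn.inv_mul_eq [LE α] (hg : TrivializesOn g f P) (hg' : TrivializesOn g' f P)
    {x y : α} (hx : x ∈ P) (hy : y ∈ P) (hxy : x ≤ y) : (g x)⁻¹ * g' x = (g y)⁻¹ * g' y := by
  have h : g x * (g y)⁻¹ = g' x * (g' y)⁻¹ := (hg hx hy hxy).symm.trans (hg' hx hy hxy)
  rw [inv_mul_eq_iff_eq_mul, ← mul_assoc, h, inv_mul_cancel_right]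

theorem IsCocycleOn.trivializesOn_Ici [Preorder α] (hf : IsCocycleOn f P) {x : α} (hx : x ∈ P) :
    TrivializesOn (fun y => (f x y)⁻¹) f (Set.Ici x ∩ P) := fun y hy z hz hyz => by
  simp only [inv_inv]
  rw [hf hx hy.2 hz.2 hy.1 hyz]
  group

theorem exists_trivializesOn_of_forall_Ici [Preorder α] {C : Set α} {g : α → α → Γ}
    (hC : ∀ y ∈ P, ∃ p ∈ C, p ≤ y) (hg : ∀ p ∈ C, TrivializesOn (g p) f (Set.Ici p ∩ P))
    (heq : ∀ p ∈ C, ∀ p' ∈ C, Set.EqOn (g p) (g p') (Set.Ici p ∩ Set.Ici p' ∩ P)) :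
    ∃ G : α → Γ, TrivializesOn G f P := by
  choose! q hqC hq using hC
  refine ⟨fun y => g (q y) y, fun y hy z hz hyz => ?_⟩
  have hqz : q y ≤ z := (hq y hy).trans hyz
  rw [hg _ (hqC y hy) ⟨hq y hy, hy⟩ ⟨hqz, hz⟩ hyz,
    heq _ (hqC y hy) _ (hqC z hz) ⟨⟨hqz, hq z hz⟩, hz⟩]

end Cocycle

section Semimodular

variable {α Γ : Type*} [Lattice α] [IsUpperModularLattice α] [GradeOrder ℕ α]

theorem grade_sup_le_of_covBy {x p q : α} (hxp : x ⋖ p) (hxq : x ≤ q) :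
    grade ℕ (p ⊔ q) ≤ grade ℕ q + 1 := by
  rcases hxp.eq_or_eq (le_inf hxp.le hxq) inf_le_left with h | h
  · exact (grade_eq_grade_add_one_of_covBy (covBy_sup_of_inf_covBy_left (h ▸ hxp))).le
  · rw [sup_eq_right.2 (inf_eq_left.1 h)]
    exact Nat.le_succ _

variable [OrderTop α] {b c : ℕ} {x : α}

/-- Connectedness of the rank selection `{b, c}` of `[x, ⊤]`, phrased for a function `φ` constant
along its edges. -/
theorem eq_of_grade_eq_of_forall_le {β : Type*} {φ : α → β} (hbc : b < c) (hc : c ≤ grade ℕ (⊤ : α))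
    (hxb : grade ℕ x ≤ b)
    (hφ : ∀ y z, x ≤ y → y ≤ z → grade ℕ y = b → grade ℕ z = c → φ y = φ z)
    {z z' : α} (hxz : x ≤ z) (hxz' : x ≤ z') (hz : grade ℕ z = c) (hz' : grade ℕ z' = c) :
    φ z = φ z' := by
  induction h : b - grade ℕ x generalizing x z z' with
  | zero =>
    have hx : grade ℕ x = b := by omega
    rw [← hφ x z le_rfl hxz hx hz, hφ x z' le_rfl hxz' hx hz']
  | succ n ih =>
    obtain ⟨p, hxp, hpz⟩ := exists_covBy_le_of_grade_lt hxz (by omega)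
    obtain ⟨p', hxp', hpz'⟩ := exists_covBy_le_of_grade_lt hxz' (by omega)
    have hp := grade_eq_grade_add_one_of_covBy hxp
    have hp' := grade_eq_grade_add_one_of_covBy hxp'
    have hsup := grade_sup_le_of_covBy hxp hxp'.le
    obtain ⟨w, hw, hwc⟩ := exists_ge_grade_eq (x := p ⊔ p') (k := c) (by omega) hc
    obtain ⟨hpw, hpw'⟩ := sup_le_iff.1 hw
    calc φ z = φ w := ih (by omega) (fun y z hy => hφ y z (hxp.le.trans hy))
              hpz hpw hz hwc (by omega)
      _ = φ z' := ih (by omega) (fun y z hy => hφ y z (hxp'.le.trans hy))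
              hpw' hpz' hwc hz' (by omega)

variable [Group Γ] {f : α → α → Γ} {g g' : α → Γ} {T : Set ℕ}

theorem TrivializesOn.eqOn_sup {p p' w : α} (hbT : b ∈ T) (hcT : IsGreatest T c) (hbc : b < c)
    (hc : c ≤ grade ℕ (⊤ : α)) (hg : TrivializesOn g f (Set.Ici p ∩ grade ℕ ⁻¹' T))
    (hg' : TrivializesOn g' f (Set.Ici p' ∩ grade ℕ ⁻¹' T)) (hb : grade ℕ (p ⊔ p') ≤ b)
    (hw : p ⊔ p' ≤ w) (hwc : grade ℕ w = c) (hgw : g w = g' w) :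
    Set.EqOn g g' (Set.Ici (p ⊔ p') ∩ grade ℕ ⁻¹' T) := by
  replace hg := hg.mono (Q := Set.Ici (p ⊔ p') ∩ grade ℕ ⁻¹' T) (by gcongr; exact le_sup_left)
  replace hg' := hg'.mono (Q := Set.Ici (p ⊔ p') ∩ grade ℕ ⁻¹' T) (by gcongr; exact le_sup_right)
  rintro y ⟨hy : p ⊔ p' ≤ y, hyT⟩
  obtain ⟨z, hyz, hz⟩ := exists_ge_grade_eq (hcT.2 hyT) hc
  have hzT : grade ℕ z ∈ T := hz ▸ hcT.1
  refine inv_mul_eq_one.1 ?_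
  calc (g y)⁻¹ * g' y = (g z)⁻¹ * g' z := hg.inv_mul_eq hg' ⟨hy, hyT⟩ ⟨hy.trans hyz, hzT⟩ hyz
    _ = (g w)⁻¹ * g' w :=
      eq_of_grade_eq_of_forall_le (φ := fun u => (g u)⁻¹ * g' u) hbc hc hb
        (fun u v hu huv hub hvc => hg.inv_mul_eq hg' ⟨hu, by rwa [Set.mem_preimage, hub]⟩
          ⟨hu.trans huv, by rw [Set.mem_preimage, hvc]; exact hcT.1⟩ huv)
        (hy.trans hyz) hw hz hwc
    _ = 1 := inv_mul_eq_one.2 hgw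

theorem exists_trivializesOn_of_forall_covBy (hbT : b ∈ T) (hcT : IsGreatest T c) (hbc : b < c)
    (hc : c ≤ grade ℕ (⊤ : α)) (hxb : grade ℕ x + 2 ≤ b) (hxT : ∀ t ∈ T, grade ℕ x < t)
    (h : ∀ p, x ⋖ p → ∃ g : α → Γ, TrivializesOn g f (Set.Ici p ∩ grade ℕ ⁻¹' T)) :
    ∃ g : α → Γ, TrivializesOn g f (Set.Ici x ∩ grade ℕ ⁻¹' T) := by
  obtain ⟨p₀, hxp₀, -⟩ := exists_covBy_le_of_grade_lt (le_top : x ≤ ⊤) (by omega)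
  have grade_sup_le {p p' : α} (hp : x ⋖ p) (hp' : x ⋖ p') : grade ℕ (p ⊔ p') ≤ b :=
    (grade_sup_le_of_covBy hp hp'.le).trans <| by
      rw [grade_eq_grade_add_one_of_covBy hp']
      exact hxb
  obtain ⟨g₀, hg₀⟩ := h p₀ hxp₀
  have normalized (p : α) (hp : x ⋖ p) : ∃ g : α → Γ,
      TrivializesOn g f (Set.Ici p ∩ grade ℕ ⁻¹' T) ∧
        Set.EqOn g g₀ (Set.Ici (p ⊔ p₀) ∩ grade ℕ ⁻¹' T) := by
    obtain ⟨g, hg⟩ := h p hp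
    obtain ⟨w, hw, hwc⟩ := exists_ge_grade_eq ((grade_sup_le hp hxp₀).trans hbc.le) hc
    have hg' := hg.mul_const ((g w)⁻¹ * g₀ w)
    exact ⟨_, hg', hg'.eqOn_sup hbT hcT hbc hc hg₀ (grade_sup_le hp hxp₀) hw hwc
      (mul_inv_cancel_left _ _)⟩
  choose! g hg hgg₀ using normalized
  refine exists_trivializesOn_of_forall_Ici (C := {p | x ⋖ p}) (g := g) ?_ ?_ ?_
  · rintro y ⟨hxy, hyT⟩
    exact exists_covBy_le_of_grade_lt hxy (hxT _ hyT)
  · exact fun p hp => (hg p hp).mono (by gcongr; exact Set.inter_subset_right)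
  · rintro p hp p' hp' y ⟨⟨hpy : p ≤ y, hpy' : p' ≤ y⟩, -, hyT⟩
    have hsup : grade ℕ (p₀ ⊔ (p ⊔ p')) ≤ c :=
      (grade_sup_le_of_covBy hxp₀ (hp.le.trans le_sup_left)).trans
        (by have := grade_sup_le hp hp'; omega)
    obtain ⟨w, hw, hwc⟩ := exists_ge_grade_eq hsup hc
    have hwT : grade ℕ w ∈ T := hwc ▸ hcT.1
    simp only [sup_le_iff] at hw
    obtain ⟨hp₀w, hpw, hpw'⟩ := hw
    refine (hg p hp).eqOn_sup hbT hcT hbc hc (hg p' hp') (grade_sup_le hp hp')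
      (sup_le hpw hpw') hwc ?_ ⟨sup_le hpy hpy', hyT⟩
    rw [hgg₀ p hp ⟨sup_le hpw hp₀w, hwT⟩, hgg₀ p' hp' ⟨sup_le hpw' hp₀w, hwT⟩]

theorem IsCocycleOn.exists_trivializesOn_Ici {a : ℕ} (hf : IsCocycleOn f (grade ℕ ⁻¹' T))
    (haT : IsLeast T a) (hbT : b ∈ T) (hcT : IsGreatest T c) (hab : a < b) (hbc : b < c)
    (hc : c ≤ grade ℕ (⊤ : α)) (hxa : grade ℕ x ≤ a) :
    ∃ g : α → Γ, TrivializesOn g f (Set.Ici x ∩ grade ℕ ⁻¹' T) := by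
  induction h : a - grade ℕ x generalizing x with
  | zero =>
    have hx : grade ℕ x = a := by omega
    exact ⟨_, hf.trivializesOn_Ici (hx ▸ haT.1 : grade ℕ x ∈ T)⟩
  | succ n ih =>
    refine exists_trivializesOn_of_forall_covBy hbT hcT hbc hc (by omega)
      (fun t ht => by have := haT.2 ht; omega) fun p hp => ?_
    have := grade_eq_grade_add_one_of_covBy hp
    exact ih (by omega) (by omega)

theorem IsCocycleOn.exists_trivializesOn [OrderBot α] {T : Finset ℕ}
    (hf : IsCocycleOn f (grade ℕ ⁻¹' T)) (hcard : 3 ≤ #T)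
    (hT : (T : Set ℕ) ⊆ Set.Icc (grade ℕ (⊥ : α)) (grade ℕ (⊤ : α))) :
    ∃ g : α → Γ, TrivializesOn g f (grade ℕ ⁻¹' T) := by
  have hne : T.Nonempty := card_pos.1 (by omega)
  obtain ⟨b, hb, hb'⟩ : ∃ b ∈ T, b ∉ ({T.min' hne, T.max' hne} : Finset ℕ) :=
    exists_mem_notMem_of_card_lt_card (card_le_two.trans_lt hcard)
  simp only [mem_insert, mem_singleton, not_or] at hb'
  obtain ⟨g, hg⟩ := hf.exists_trivializesOn_Ici (T.isLeast_min' hne) hb (T.isGreatest_max' hne)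
    ((T.min'_le b hb).lt_of_ne' hb'.1) ((T.le_max' b hb).lt_of_ne hb'.2)
    (hT (T.max'_mem hne)).2 (hT (T.min'_mem hne)).1
  exact ⟨g, hg.mono fun y hy => ⟨bot_le, hy⟩⟩

end Semimodular

section Link

variable {α : Type*} [Lattice α]

/-- The elements comparable with every member of `s`. When `s` is a chain, this is the poset whose
order complex is the star of `s`. -/
def comparableSublattice (s : Set α) : Sublattice α where
  carrier := {x | ∀ y ∈ s, x ≤ y ∨ y ≤ x}
  supClosed' x hx x' hx' y hy := by
    rcases hx y hy, hx' y hy with ⟨h | h, h' | h'⟩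
    · exact .inl (sup_le h h')
    · exact .inr (h'.trans le_sup_right)
    · exact .inr (h.trans le_sup_left)
    · exact .inr (h.trans le_sup_left)
  infClosed' x hx x' hx' y hy := by
    rcases hx y hy, hx' y hy with ⟨h | h, h' | h'⟩
    · exact .inl (inf_le_left.trans h)
    · exact .inl (inf_le_left.trans h)
    · exact .inl (inf_le_right.trans h')
    · exact .inr (le_inf h h')

variable {s : Set α} {x y : comparableSublattice s}

instance [BoundedOrder α] : BoundedOrder (comparableSublattice s) :=
  Subtype.boundedOrder (fun _ _ => .inl bot_le) (fun _ _ => .inr le_top)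

theorem coe_covBy_coe_comparableSublattice (hs : IsChain (· ≤ ·) s) :
    (x : α) ⋖ y ↔ x ⋖ y := by
  refine ⟨fun h => h.of_image (OrderEmbedding.subtype _), fun h => ⟨h.lt, fun z hxz hzy => ?_⟩⟩
  suffices hz : z ∈ comparableSublattice s from h.2 (c := ⟨z, hz⟩) hxz hzy
  intro v hv
  rcases x.2 v hv with hxv | hvx
  · rcases y.2 v hv with hyv | hvy
    · exact .inl (hzy.le.trans hyv)
    · have hv' : v ∈ comparableSublattice s := fun u hu => hs.total hv hu
      rcases h.eq_or_eq (c := ⟨v, hv'⟩) hxv hvy with rfl | rfl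
      · exact .inr hxz.le
      · exact .inl hzy.le
  · exact .inr (hvx.trans hxz.le)

theorem isUpperModularLattice_comparableSublattice [IsUpperModularLattice α]
    (hs : IsChain (· ≤ ·) s) : IsUpperModularLattice (comparableSublattice s) where
  covBy_sup_of_inf_covBy {_ _} h :=
    (coe_covBy_coe_comparableSublattice hs).1
      (covBy_sup_of_inf_covBy_left ((coe_covBy_coe_comparableSublattice hs).2 h))

/-- The grading of `α` restricts to the elements comparable with a chain, because covers in the
sublattice are covers in `α`. -/
abbrev gradeOrderComparableSublattice {𝕆 : Type*} [Preorder 𝕆] [GradeOrder 𝕆 α]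
    (hs : IsChain (· ≤ ·) s) : GradeOrder 𝕆 (comparableSublattice s) :=
  .liftRight Subtype.val (fun _ _ h => h) fun _ _ => (coe_covBy_coe_comparableSublattice hs).2

theorem IsCocycleOn.exists_trivializesOn_comparableSublattice {Γ : Type*} [Group Γ]
    [IsUpperModularLattice α] [BoundedOrder α] [GradeOrder ℕ α] {f : α → α → Γ} {T : Finset ℕ}
    (hs : IsChain (· ≤ ·) s) (hf : IsCocycleOn f (comparableSublattice s ∩ grade ℕ ⁻¹' T))
    (hcard : 3 ≤ #T) (hT : (T : Set ℕ) ⊆ Set.Icc (grade ℕ (⊥ : α)) (grade ℕ (⊤ : α))) :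
    ∃ g : α → Γ, TrivializesOn g f (comparableSublattice s ∩ grade ℕ ⁻¹' T) := by
  let L := comparableSublattice s
  have : IsUpperModularLattice L := isUpperModularLattice_comparableSublattice hs
  let : GradeOrder ℕ L := gradeOrderComparableSublattice hs
  have hfL : IsCocycleOn (fun x y : L => f x y) (grade ℕ ⁻¹' T) :=
    fun x hx y hy z hz => hf ⟨x.2, hx⟩ ⟨y.2, hy⟩ ⟨z.2, hz⟩
  obtain ⟨g, hg⟩ := hfL.exists_trivializesOn hcard hT
  refine ⟨Function.extend Subtype.val g 1, fun x hx y hy hxy => ?_⟩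
  lift x to L using hx.1
  lift y to L using hy.1
  simp only [Subtype.val_injective.extend_apply]
  exact hg hx.2 hy.2 hxy

end Link

section Face

variable {α : Type*} [DecidableEq α] {S : Finset ℕ} {s : Finset α}

/-- A face of the order complex of the elements of `α` whose grade lies in `S`. -/
def IsRankedChain {α : Type*} [Preorder α] [GradeOrder ℕ α] (S : Finset ℕ) (s : Finset α) : Prop :=
  IsChain (· ≤ ·) (s : Set α) ∧ ∀ x ∈ s, grade ℕ x ∈ S

theorem isRankedChain_insert [Preorder α] [GradeOrder ℕ α] {x : α} :
    IsRankedChain S (insert x s) ↔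
      IsRankedChain S s ∧ grade ℕ x ∈ S ∧ ∀ y ∈ s, x ≤ y ∨ y ≤ x := by
  simp only [IsRankedChain, forall_mem_insert, coe_insert]
  constructor
  · rintro ⟨hs, hx, hsS⟩
    exact ⟨⟨hs.mono (Set.subset_insert _ _), hsS⟩, hx, fun y hy =>
      hs.total (Set.mem_insert _ _) (Set.mem_insert_of_mem _ hy)⟩
  · rintro ⟨⟨hs, hsS⟩, hx, hxs⟩
    exact ⟨hs.insert fun y hy _ => hxs y hy, hx, hsS⟩

/-- The vertices of the link of the face `s`. -/
def linkVertices [Preorder α] [GradeOrder ℕ α] (S : Finset ℕ) (s : Finset α) : Set α :=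
  {x | x ∉ s ∧ IsRankedChain S (insert x s)}

theorem isRankedChain_insert_insert [Preorder α] [GradeOrder ℕ α] {x y : α} :
    IsRankedChain S (insert x (insert y s)) ∧ x ∉ s ∧ y ∉ s ↔
      x ∈ linkVertices S s ∧ y ∈ linkVertices S s ∧ (x ≤ y ∨ y ≤ x) := by
  simp only [linkVertices, isRankedChain_insert, forall_mem_insert, Set.mem_ofPred_eq]
  tauto

theorem isCocycleOn_linkVertices [PartialOrder α] [GradeOrder ℕ α] {Γ : Type*} [Group Γ]
    {f : α → α → Γ}
    (hanti : ∀ x y : α, x ≠ y → x ∉ s → y ∉ s → IsRankedChain S (insert x (insert y s)) →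
      f x y = (f y x)⁻¹)
    (hcocycle : ∀ x y z : α, x ≠ y → y ≠ z → x ≠ z → x ∉ s → y ∉ s → z ∉ s →
      IsRankedChain S (insert x (insert y (insert z s))) → f x y * f y z * f z x = 1) :
    IsCocycleOn (fun x y => if x = y then 1 else f x y) (linkVertices S s) := by
  intro x hx y hy z hz hxy hyz
  rcases eq_or_ne x y with rfl | hxy'
  · simp
  rcases eq_or_ne y z with rfl | hyz'
  · simp
  have hxz : x ≤ z := hxy.trans hyz
  have hxz' : x ≠ z := by
    rintro rfl
    exact hxy' (hxy.antisymm hyz)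
  have htriangle : IsRankedChain S (insert x (insert y (insert z s))) := by
    simp only [linkVertices, isRankedChain_insert, forall_mem_insert, Set.mem_ofPred_eq] at *
    tauto
  have hedge := (isRankedChain_insert_insert.2 ⟨hx, hz, .inl hxz⟩).1
  simp only [if_neg hxy', if_neg hyz', if_neg hxz']
  rw [hanti x z hxz' hx.1 hz.1 hedge]
  exact (eq_inv_of_mul_eq_one_left (hcocycle x y z hxy' hyz' hxz' hx.1 hy.1 hz.1 htriangle)).symm

theorem linkVertices_eq_inter [Lattice α] [GradeOrder ℕ α] (hs : IsRankedChain S s) :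
    linkVertices S s = (comparableSublattice (s : Set α) : Set α) ∩
      grade ℕ ⁻¹' ((S \ s.image (grade ℕ) : Finset ℕ) : Set ℕ) := by
  ext x
  have grade_mem_image (hxs : ∀ y ∈ s, x ≤ y ∨ y ≤ x) : grade ℕ x ∈ s.image (grade ℕ) ↔ x ∈ s := by
    refine ⟨fun hx => ?_, mem_image_of_mem _⟩
    obtain ⟨y, hy, hyx⟩ := mem_image.1 hx
    rcases hxs y hy with h | h
    · exact h.eq_of_not_lt (fun hlt => (grade_strictMono hlt).ne' hyx) ▸ hy
    · exact h.eq_of_not_lt (fun hlt => (grade_strictMono hlt).ne hyx) ▸ hy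
  have : x ∈ comparableSublattice (s : Set α) ↔ ∀ y ∈ s, x ≤ y ∨ y ≤ x := .rfl
  simp only [linkVertices, isRankedChain_insert, Set.mem_ofPred_eq, Set.mem_inter_iff,
    SetLike.mem_coe, Set.mem_preimage, mem_sdiff, this]
  grind

end Face

theorem stmt_7_general {α Γ : Type*} [Lattice α] [IsUpperModularLattice α] [BoundedOrder α]
    [GradeOrder ℕ α] [DecidableEq α] [Group Γ] {S : Finset ℕ}
    (hS : (S : Set ℕ) ⊆ Set.Icc (grade ℕ (⊥ : α)) (grade ℕ (⊤ : α)))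
    {s : Finset α} (hs : IsRankedChain S s) (hcodim : #s + 3 ≤ #S) (f : α → α → Γ)
    (hanti : ∀ x y : α, x ≠ y → x ∉ s → y ∉ s → IsRankedChain S (insert x (insert y s)) →
      f x y = (f y x)⁻¹)
    (hcocycle : ∀ x y z : α, x ≠ y → y ≠ z → x ≠ z → x ∉ s → y ∉ s → z ∉ s →
      IsRankedChain S (insert x (insert y (insert z s))) → f x y * f y z * f z x = 1) :
    ∃ g : α → Γ, ∀ x y : α, x ≠ y → x ∉ s → y ∉ s → IsRankedChain S (insert x (insert y s)) →
      f x y = g x * (g y)⁻¹ := by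
  have hcard : 3 ≤ #(S \ s.image (grade ℕ)) := by
    have := le_card_sdiff (s.image (grade ℕ)) S
    have : #(s.image (grade ℕ)) ≤ #s := card_image_le
    omega
  have hf := isCocycleOn_linkVertices hanti hcocycle
  rw [linkVertices_eq_inter hs] at hf
  obtain ⟨g, hg⟩ := hf.exists_trivializesOn_comparableSublattice hs.1 hcard
    (Set.Subset.trans (coe_subset.2 sdiff_subset) hS)
  rw [← linkVertices_eq_inter hs] at hg
  have ascending {x y : α} (hne : x ≠ y) (hx : x ∈ linkVertices S s) (hy : y ∈ linkVertices S s)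
      (hxy : x ≤ y) : f x y = g x * (g y)⁻¹ := by
    simpa only [if_neg hne] using hg hx hy hxy
  refine ⟨g, fun x y hne hx hy hface => ?_⟩
  obtain ⟨hx', hy', hxy | hyx⟩ := isRankedChain_insert_insert.1 ⟨hface, hx, hy⟩
  · exact ascending hne hx' hy' hxy
  · rw [hanti x y hne hx hy hface, ascending hne.symm hy' hx' hyx]
    group

/-- Subspaces are graded by their dimension. -/
noncomputable instance {K V : Type*} [DivisionRing K] [AddCommGroup V] [Module K V]
    [FiniteDimensional K V] : GradeOrder ℕ (Submodule K V) where
  grade W := Module.finrank K W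
  grade_strictMono _ _ h := Submodule.finrank_lt_finrank_of_lt h
  covBy_grade U W h := by
    obtain ⟨v, hvW, hvU⟩ := SetLike.exists_of_lt h.lt
    have hsup : U ⊔ Submodule.span K {v} = W :=
      (h.eq_or_eq le_sup_left (sup_le h.le (by simpa using hvW))).resolve_left
        (by simpa using hvU)
    rw [Nat.covBy_iff_add_one_eq, ← hsup, Submodule.finrank_sup_span_singleton hvU]

theorem grade_submodule {K V : Type*} [DivisionRing K] [AddCommGroup V] [Module K V]
    [FiniteDimensional K V] (W : Submodule K V) : grade ℕ W = Module.finrank K W := rfl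

/-- The link of any face `s` of codimension at least `3` in the projected
flags complex `B(d,S,q)` has trivial 1-cohomology with respect to every group `Γ`: every
`Γ`-valued 1-cocycle on the link of `s` is a 1-coboundary. -/
theorem stmt_7 (q : ℕ) (hq : IsPrimePow q)
    (F : Type) [Field F] [Fintype F] (hF : Fintype.card F = q)
    (d : ℕ) (hd : 3 ≤ d)
    (S : Finset ℕ) (hS : S ⊆ Finset.Icc 1 (d - 1)) (hScard : 2 ≤ S.card)
    (s : Finset (Submodule F (Fin d → F))) (hs : IsFlagFace F d S s)
    (hcodim : s.card + 3 ≤ S.card)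
    (Γ : Type) [Group Γ]
    (f : Submodule F (Fin d → F) → Submodule F (Fin d → F) → Γ)
    (hanti : ∀ U V : Submodule F (Fin d → F), U ≠ V → U ∉ s → V ∉ s →
      IsFlagFace F d S (insert U (insert V s)) → f U V = (f V U)⁻¹)
    (hcocycle : ∀ U V W : Submodule F (Fin d → F),
      U ≠ V → V ≠ W → U ≠ W → U ∉ s → V ∉ s → W ∉ s →
      IsFlagFace F d S (insert U (insert V (insert W s))) →
      f U V * f V W * f W U = 1) :
    ∃ g : Submodule F (Fin d → F) → Γ,
      ∀ U V : Submodule F (Fin d → F), U ≠ V → U ∉ s → V ∉ s →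
        IsFlagFace F d S (insert U (insert V s)) → f U V = g U * (g V)⁻¹ := by
  refine stmt_7_general (fun k hk => ?_) hs hcodim f hanti hcocycle
  have := mem_Icc.1 (hS hk)
  simp only [grade_submodule, finrank_bot, finrank_top, Module.finrank_fin_fun, Set.mem_Icc]
  omega
end
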